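/- arXiv:2210.02215 — 3 statements merged into one kernel-verified Lean document; each statement's English description precedes it below -/
import Mathlib

section
/- Le Cam's lemma for (ε,δ)-DP: if M : X^n → Y is (ε,δ)-differentially private, then for any test function Ψ : Y → {1,2} and any probability distributions P_1, P_2 on X^n, max_{i∈{1,2}} P_{X∼P_i,M}(Ψ(M(X)) ≠ i) ≥ (1/2)·max{ 1 − TV(P_1,P_2), 1 − (1 − e^{−nε} + 2n e^{−ε} δ)·TV(P_1,P_2) }. Furthermore, when P_1 = p_1^{⊗n} and P_2 = p_2^{⊗n} are product distributions, max_{i∈{1,2}} P_{X∼P_i,M}(Ψ(M(X)) ≠ i) ≥ (1/2)·( (1 − (1 − e^{−ε})·TV(p_1,p_2))^n − 2n e^{−ε} δ·TV(p_1,p_2) ). -/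
open MeasureTheory ProbabilityTheory Real
open scoped ENNReal NNReal

variable {𝓧 𝓨 : Type*} [MeasurableSpace 𝓧] [MeasurableSpace 𝓨]

/-- A randomized mechanism `M : 𝓧^n → 𝓨` (a Markov kernel) is `(ε, δ)`-differentially
private if for any two datasets at Hamming distance at most `1` and any measurable event `S`,
`P(M(x) ∈ S) ≤ e^ε P(M(y) ∈ S) + δ`. -/
def IsDP [DecidableEq 𝓧] {n : ℕ} (M : Kernel (Fin n → 𝓧) 𝓨) (ε δ : ℝ) : Prop :=
  ∀ x y : Fin n → 𝓧, hammingDist x y ≤ 1 →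
    ∀ S : Set 𝓨, MeasurableSet S →
      M x S ≤ ENNReal.ofReal (Real.exp ε) * M y S + ENNReal.ofReal δ

/-- The total variation distance between two measures:
`TV(P, Q) = sup { P(S) - Q(S) | S measurable }`. -/
noncomputable def tvDist {α : Type*} [MeasurableSpace α] (P Q : Measure α) : ℝ :=
  ⨆ S : {S : Set α // MeasurableSet S}, ((P S.1).toReal - (Q S.1).toReal)


lemma tv_le_one {α : Type*} [MeasurableSpace α] (p q : Measure α)
    [IsProbabilityMeasure p] [IsProbabilityMeasure q] : tvDist p q ≤ 1 := by
  unfold tvDist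
  have : Nonempty {S : Set α // MeasurableSet S} := ⟨⟨∅, MeasurableSet.empty⟩⟩
  apply ciSup_le
  intro S
  have h1 : p.real S.1 ≤ 1 := measureReal_le_one
  have h2 : 0 ≤ q.real S.1 := measureReal_nonneg
  simp only [Measure.real] at h1 h2
  linarith

lemma le_tv {α : Type*} [MeasurableSpace α] (p q : Measure α)
    [IsProbabilityMeasure p] [IsProbabilityMeasure q] {S : Set α} (hS : MeasurableSet S) :
    p.real S - q.real S ≤ tvDist p q := by
  unfold tvDist
  refine le_ciSup (f := fun S : {S : Set α // MeasurableSet S} =>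
    ((p S.1).toReal - (q S.1).toReal)) ?_ ⟨S, hS⟩
  refine ⟨1, ?_⟩
  rintro _ ⟨S, rfl⟩
  have h1 : p.real S.1 ≤ 1 := measureReal_le_one
  have h2 : 0 ≤ q.real S.1 := measureReal_nonneg
  simp only [Measure.real] at h1 h2
  simp only
  linarith

/-- First coordinate of a coupled point. -/
def cX {α : Type*} : α ⊕ (α × α) → α := Sum.elim id Prod.fst
/-- Second coordinate of a coupled point. -/
def cY {α : Type*} : α ⊕ (α × α) → α := Sum.elim id Prod.snd

lemma measurable_cX {α : Type*} [MeasurableSpace α] :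
    Measurable (cX : α ⊕ (α × α) → α) := measurable_id.sumElim measurable_fst
lemma measurable_cY {α : Type*} [MeasurableSpace α] :
    Measurable (cY : α ⊕ (α × α) → α) := measurable_id.sumElim measurable_snd

lemma exists_coupling {α : Type*} [MeasurableSpace α] (p q : Measure α)
    [IsProbabilityMeasure p] [IsProbabilityMeasure q] :
    ∃ γ : Measure (α ⊕ (α × α)), IsProbabilityMeasure γ ∧ γ.map cX = p ∧ γ.map cY = q ∧
      γ.real (Set.range Sum.inr) ≤ tvDist p q := by
  obtain ⟨s, hs⟩ := exists_isHahnDecomposition q p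
  have hms := hs.measurableSet
  set a := p.restrict s - q.restrict s with ha
  set b := q.restrict sᶜ - p.restrict sᶜ with hb
  have ha' : a + q.restrict s = p.restrict s := Measure.sub_add_cancel_of_le hs.le_on
  have hb' : b + p.restrict sᶜ = q.restrict sᶜ := Measure.sub_add_cancel_of_le hs.ge_on_compl
  set m := q.restrict s + p.restrict sᶜ with hm
  have hp : m + a = p := by
    rw [← Measure.restrict_add_restrict_compl (μ := p) hms, ← ha', hm]
    abel
  have hq : m + b = q := by
    rw [← Measure.restrict_add_restrict_compl (μ := q) hms, ← hb', hm]
    abel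
  have : IsFiniteMeasure a := ⟨by
    refine lt_of_le_of_lt ?_ (measure_lt_top p Set.univ)
    rw [← hp]; simp⟩
  have : IsFiniteMeasure b := ⟨by
    refine lt_of_le_of_lt ?_ (measure_lt_top q Set.univ)
    rw [← hq]; simp⟩
  have hab : a Set.univ = b Set.univ := by
    have h1 : m Set.univ + a Set.univ = m Set.univ + b Set.univ := by
      rw [← Measure.add_apply, ← Measure.add_apply, hp, hq]; simp
    exact (ENNReal.add_right_inj (measure_ne_top m _)).1 h1
  have hfst : (((a Set.univ)⁻¹ • a.prod b).map Prod.fst) = a := by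
    rw [Measure.map_smul, Measure.map_fst_prod, ← hab, smul_smul]
    by_cases h0 : a Set.univ = 0
    · rw [Measure.measure_univ_eq_zero.1 h0]; simp
    · rw [ENNReal.inv_mul_cancel h0 (measure_ne_top a _), one_smul]
  have hsnd : (((a Set.univ)⁻¹ • a.prod b).map Prod.snd) = b := by
    rw [Measure.map_smul, Measure.map_snd_prod, smul_smul]
    by_cases h0 : a Set.univ = 0
    · rw [hab] at h0; rw [Measure.measure_univ_eq_zero.1 h0]; simp
    · rw [ENNReal.inv_mul_cancel h0 (measure_ne_top a _), one_smul]
  set γ : Measure (α ⊕ (α × α)) :=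
    m.map Sum.inl + ((a Set.univ)⁻¹ • a.prod b).map Sum.inr with hγ
  have hX : γ.map cX = p := by
    rw [hγ, Measure.map_add _ _ measurable_cX, Measure.map_map measurable_cX measurable_inl,
      Measure.map_map measurable_cX measurable_inr]
    change m.map id + ((a Set.univ)⁻¹ • a.prod b).map Prod.fst = p
    rw [Measure.map_id, hfst, hp]
  have hY : γ.map cY = q := by
    rw [hγ, Measure.map_add _ _ measurable_cY, Measure.map_map measurable_cY measurable_inl,
      Measure.map_map measurable_cY measurable_inr]
    change m.map id + ((a Set.univ)⁻¹ • a.prod b).map Prod.snd = q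
    rw [Measure.map_id, hsnd, hq]
  refine ⟨γ, ⟨?_⟩, hX, hY, ?_⟩
  · have : (γ.map cX) Set.univ = 1 := by rw [hX]; simp
    rwa [Measure.map_apply measurable_cX MeasurableSet.univ, Set.preimage_univ] at this
  · have h1 : γ (Set.range Sum.inr) = a Set.univ := by
      rw [hγ, Measure.add_apply, Measure.map_apply measurable_inl measurableSet_range_inr,
        Measure.map_apply measurable_inr measurableSet_range_inr, Set.preimage_range]
      rw [show (Sum.inl ⁻¹' (Set.range (Sum.inr : α × α → α ⊕ (α × α))) : Set α) = ∅ by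
        ext; simp]
      rw [measure_empty, zero_add]
      have h2 := congrArg (fun μ : Measure α => μ Set.univ) hfst
      rwa [Measure.map_apply measurable_fst MeasurableSet.univ, Set.preimage_univ] at h2
    have h3 : a.real Set.univ + q.real s = p.real s := by
      have := congrArg (fun μ : Measure α => μ.real Set.univ) ha'
      rw [measureReal_add_apply] at this
      simpa using this
    have h4 := le_tv p q hms
    have h5 : γ.real (Set.range Sum.inr) = a.real Set.univ := by
      simp only [Measure.real, h1]
    linarith

lemma group_privacy {𝓧 : Type*} [DecidableEq 𝓧] {n : ℕ} (f : (Fin n → 𝓧) → ℝ) (ε δ : ℝ)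
    (hε : 0 < ε) (hδ0 : 0 ≤ δ)
    (hf : ∀ x y, hammingDist x y ≤ 1 → f x ≤ Real.exp ε * f y + δ) (k : ℕ) :
    ∀ x y, hammingDist x y ≤ k →
      Real.exp (-ε) ^ k * f y - k * (Real.exp (-ε) * δ) ≤ f x := by
  induction k with
  | zero =>
    intro x y h
    have : x = y := by simpa using h
    simp [this]
  | succ k ih =>
    intro x y h
    have he1 : Real.exp (-ε) ≤ 1 := Real.exp_le_one_iff.2 (by linarith)
    have he0 := Real.exp_pos (-ε)
    have hee : Real.exp (-ε) * Real.exp ε = 1 := by rw [← Real.exp_add]; simp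
    obtain ⟨x', h1, h2⟩ : ∃ x', hammingDist x' x ≤ 1 ∧ hammingDist x' y ≤ k := by
      by_cases hxy : x = y
      · exact ⟨x, by simp, by simp [hxy]⟩
      · obtain ⟨i, hi⟩ := Function.ne_iff.1 hxy
        refine ⟨Function.update x i (y i), ?_, ?_⟩
        · unfold hammingDist
          refine (Finset.card_le_card (t := {i}) ?_).trans (by simp)
          intro j hj
          by_contra hne
          have hne' : j ≠ i := by simpa using hne
          simp [Function.update_of_ne hne'] at hj
        · unfold hammingDist at h ⊢
          have hlt : (Finset.univ.filter fun j => Function.update x i (y i) j ≠ y j).card <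
              (Finset.univ.filter fun j => x j ≠ y j).card := by
            apply Finset.card_lt_card
            refine Finset.ssubset_iff_subset_ne.2 ⟨?_, ?_⟩
            · intro j hj
              by_cases hji : j = i
              · subst hji; simp at hj
              · simpa [Function.update_of_ne hji] using hj
            · intro heq
              have : i ∈ Finset.univ.filter fun j => x j ≠ y j := by simpa using hi
              rw [← heq] at this
              simp at this
          omega
    have h3 := ih x' y h2
    have h4 := hf x' x h1
    have h5 : Real.exp (-ε) * f x' ≤ f x + Real.exp (-ε) * δ := by
      have := mul_le_mul_of_nonneg_left h4 he0.le
      rw [mul_add, ← mul_assoc, hee] at this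
      linarith
    have h6 := mul_le_mul_of_nonneg_left h3 he0.le
    have h7 : Real.exp (-ε) * (k * (Real.exp (-ε) * δ)) ≤ 1 * (k * (Real.exp (-ε) * δ)) :=
      mul_le_mul_of_nonneg_right he1 (by positivity)
    rw [pow_succ]
    push_cast
    nlinarith

lemma gap_bound {𝓧 : Type*} [DecidableEq 𝓧] {n : ℕ} (f : (Fin n → 𝓧) → ℝ) (ε δ : ℝ)
    (hε : 0 < ε) (hδ0 : 0 ≤ δ) (hf1 : ∀ x, f x ≤ 1)
    (hf : ∀ x y, hammingDist x y ≤ 1 → f x ≤ Real.exp ε * f y + δ) (k : ℕ)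
    (x y) (h : hammingDist x y ≤ k) :
      Real.exp (-ε) ^ k - k * (Real.exp (-ε) * δ) ≤ f x + 1 - f y := by
  have h1 := group_privacy f ε δ hε hδ0 hf k x y h
  have he1 : Real.exp (-ε) ^ k ≤ 1 :=
    pow_le_one₀ (Real.exp_pos _).le (Real.exp_le_one_iff.2 (by linarith))
  nlinarith [mul_nonneg (sub_nonneg.2 he1) (sub_nonneg.2 (hf1 y))]

lemma bdd_integrable {α : Type*} [MeasurableSpace α] (μ : Measure α) [IsFiniteMeasure μ]
    (f : α → ℝ) (hm : Measurable f) (h0 : ∀ x, 0 ≤ f x) (h1 : ∀ x, f x ≤ 1) :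
    Integrable f μ :=
  Integrable.of_bound hm.aestronglyMeasurable 1
    (Filter.Eventually.of_forall fun x => by
      rw [Real.norm_eq_abs, abs_of_nonneg (h0 x)]; exact h1 x)

/-- indicator of the non-identical part -/
noncomputable def cI {α : Type*} : α ⊕ (α × α) → ℝ := Sum.elim (fun _ => 0) (fun _ => 1)

lemma measurable_cI {α : Type*} [MeasurableSpace α] :
    Measurable (cI : α ⊕ (α × α) → ℝ) := measurable_const.sumElim measurable_const

lemma cI_nonneg {α : Type*} (z : α ⊕ (α × α)) : 0 ≤ cI z := by
  rcases z with z | z <;> simp [cI]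
lemma cI_le {α : Type*} (z : α ⊕ (α × α)) : cI z ≤ 1 := by
  rcases z with z | z <;> simp [cI]

lemma integral_cI {α : Type*} [MeasurableSpace α] (γ : Measure (α ⊕ (α × α))) :
    ∫ z, cI z ∂γ = γ.real (Set.range Sum.inr) := by
  rw [← integral_indicator_one measurableSet_range_inr]
  congr 1
  ext z
  rcases z with z | z <;> simp [cI]

lemma part_one {α : Type*} [MeasurableSpace α] (p q : Measure α)
    [IsProbabilityMeasure p] [IsProbabilityMeasure q] (f : α → ℝ) (hm : Measurable f)
    (h0 : ∀ x, 0 ≤ f x) (h1 : ∀ x, f x ≤ 1) (D : ℝ) (hD : 0 ≤ D)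
    (hfD : ∀ x y, 1 - D ≤ f x + 1 - f y) :
    1 - D * tvDist p q ≤ ∫ x, f x ∂p + (1 - ∫ x, f x ∂q) := by
  obtain ⟨γ, hγ, hX, hY, ht⟩ := exists_coupling p q
  have hiX : Integrable (fun z => f (cX z)) γ :=
    bdd_integrable _ _ (hm.comp measurable_cX) (fun _ => h0 _) (fun _ => h1 _)
  have hiY : Integrable (fun z => f (cY z)) γ :=
    bdd_integrable _ _ (hm.comp measurable_cY) (fun _ => h0 _) (fun _ => h1 _)
  have hiI : Integrable cI γ := bdd_integrable _ _ measurable_cI cI_nonneg cI_le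
  have hle : ∫ z, (f (cY z) - f (cX z)) ∂γ ≤ ∫ z, D * cI z ∂γ := by
    apply integral_mono (hiY.sub hiX) (hiI.const_mul D)
    intro z
    rcases z with z | z
    · simp [cX, cY, cI]
    · have := hfD z.1 z.2
      simp [cX, cY, cI]
      linarith
  rw [integral_sub hiY hiX, integral_const_mul, integral_cI] at hle
  have eX : ∫ x, f x ∂p = ∫ z, f (cX z) ∂γ := by
    rw [← hX, integral_map measurable_cX.aemeasurable hm.aestronglyMeasurable]
  have eY : ∫ x, f x ∂q = ∫ z, f (cY z) ∂γ := by
    rw [← hY, integral_map measurable_cY.aemeasurable hm.aestronglyMeasurable]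
  rw [eX, eY]
  have := mul_le_mul_of_nonneg_left ht hD
  linarith

lemma part_two {α : Type*} [MeasurableSpace α] [DecidableEq α] {n : ℕ} (p q : Measure α)
    [IsProbabilityMeasure p] [IsProbabilityMeasure q] (f : (Fin n → α) → ℝ) (hm : Measurable f)
    (h0 : ∀ x, 0 ≤ f x) (h1 : ∀ x, f x ≤ 1) (ε δ : ℝ)
    (hε : 0 < ε) (hδ0 : 0 ≤ δ)
    (hf : ∀ x y, hammingDist x y ≤ 1 → f x ≤ Real.exp ε * f y + δ) :
    (1 - (1 - Real.exp (-ε)) * tvDist p q) ^ n - n * (Real.exp (-ε) * δ) * tvDist p q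
      ≤ ∫ x, f x ∂(Measure.pi fun _ => p) + (1 - ∫ x, f x ∂(Measure.pi fun _ => q)) := by
  obtain ⟨γ, hγ, hX, hY, ht⟩ := exists_coupling p q
  have he1 : Real.exp (-ε) ≤ 1 := Real.exp_le_one_iff.2 (by linarith)
  have he0 := Real.exp_pos (-ε)
  set e := Real.exp (-ε) with he
  set Γ : Measure (Fin n → α ⊕ (α × α)) := Measure.pi fun _ => γ with hΓ
  have mX : Measurable (fun (z : Fin n → α ⊕ (α × α)) i => cX (z i)) :=
    measurable_pi_lambda _ fun i => measurable_cX.comp (measurable_pi_apply i)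
  have mY : Measurable (fun (z : Fin n → α ⊕ (α × α)) i => cY (z i)) :=
    measurable_pi_lambda _ fun i => measurable_cY.comp (measurable_pi_apply i)
  have hPX : Γ.map (fun z i => cX (z i)) = Measure.pi fun _ => p := by
    have : IsProbabilityMeasure (γ.map cX) := by rw [hX]; infer_instance
    rw [hΓ, Measure.pi_map_pi (μ := fun _ : Fin n => γ) (f := fun _ => cX)
      (fun _ => measurable_cX.aemeasurable), hX]
  have hPY : Γ.map (fun z i => cY (z i)) = Measure.pi fun _ => q := by
    have : IsProbabilityMeasure (γ.map cY) := by rw [hY]; infer_instance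
    rw [hΓ, Measure.pi_map_pi (μ := fun _ : Fin n => γ) (f := fun _ => cY)
      (fun _ => measurable_cY.aemeasurable), hY]
  have hiX : Integrable (fun z : Fin n → α ⊕ (α × α) => f (fun i => cX (z i))) Γ :=
    bdd_integrable _ _ (hm.comp mX) (fun _ => h0 _) (fun _ => h1 _)
  have hiY : Integrable (fun z : Fin n → α ⊕ (α × α) => f (fun i => cY (z i))) Γ :=
    bdd_integrable _ _ (hm.comp mY) (fun _ => h0 _) (fun _ => h1 _)
  have hiI : Integrable cI γ := bdd_integrable _ _ measurable_cI cI_nonneg cI_le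
  have hiIi : ∀ i : Fin n, Integrable (fun z : Fin n → α ⊕ (α × α) => cI (z i)) Γ := fun i =>
    bdd_integrable _ _ (measurable_cI.comp (measurable_pi_apply i)) (fun _ => cI_nonneg _)
      (fun _ => cI_le _)
  have hw0 : ∀ z : α ⊕ (α × α), 0 ≤ 1 - (1 - e) * cI z := fun z => by
    nlinarith [cI_nonneg z, cI_le z]
  have hw1 : ∀ z : α ⊕ (α × α), 1 - (1 - e) * cI z ≤ 1 := fun z => by
    nlinarith [cI_nonneg z, cI_le z]
  have hiP : Integrable (fun z : Fin n → α ⊕ (α × α) => ∏ i, (1 - (1 - e) * cI (z i))) Γ := by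
    apply bdd_integrable
    · refine Finset.measurable_prod _ fun i _ => ?_
      exact measurable_const.sub ((measurable_cI.comp (measurable_pi_apply i)).const_mul _)
    · intro z; exact Finset.prod_nonneg fun i _ => hw0 _
    · intro z; exact Finset.prod_le_one (fun i _ => hw0 _) fun i _ => hw1 _
  have hiS : Integrable (fun z : Fin n → α ⊕ (α × α) => (e * δ) * ∑ i, cI (z i)) Γ :=
    (integrable_finsetSum _ fun i _ => hiIi i).const_mul _
  have hpt : ∀ z : Fin n → α ⊕ (α × α),
      ∏ i, (1 - (1 - e) * cI (z i)) - (e * δ) * ∑ i, cI (z i)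
        ≤ (f (fun i => cX (z i)) - f (fun i => cY (z i))) + 1 := by
    intro z
    set k := (Finset.univ.filter fun i => (z i).isRight = true).card with hk
    have hd : hammingDist (fun i => cX (z i)) (fun i => cY (z i)) ≤ k := by
      unfold hammingDist
      apply Finset.card_le_card
      intro i hi
      rcases hz : z i with w | w
      · rw [Finset.mem_filter] at hi
        exact absurd (by simp only [hz, cX, cY, Sum.elim_inl]) hi.2
      · simp [hz]
    have hS : ∑ i, cI (z i) = k := by
      rw [hk, Finset.card_filter]
      push_cast
      refine Finset.sum_congr rfl fun i _ => ?_
      rcases z i with w | w <;> simp [cI]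
    have hP : ∏ i, (1 - (1 - e) * cI (z i)) = e ^ k := by
      rw [hk, ← Finset.prod_const, Finset.prod_filter]
      refine Finset.prod_congr rfl fun i _ => ?_
      rcases z i with w | w <;> simp [cI]
    have := gap_bound f ε δ hε hδ0 h1 hf k _ _ hd
    rw [hS, hP]
    linarith
  have hint := integral_mono (hiP.sub hiS) ((hiX.sub hiY).add (integrable_const (1 : ℝ))) hpt
  simp only [Pi.sub_apply, Pi.add_apply] at hint
  have hadd : ∫ z, ((f (fun i => cX (z i)) - f (fun i => cY (z i))) + 1) ∂Γ =
      ∫ z, (f (fun i => cX (z i)) - f (fun i => cY (z i))) ∂Γ + ∫ _, (1 : ℝ) ∂Γ :=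
    integral_add (hiX.sub hiY) (integrable_const _)
  rw [integral_sub hiP hiS, hadd, integral_sub hiX hiY, integral_const_mul, integral_finsetSum _ fun i _ => hiIi i,
    hΓ, integral_fintype_prod_eq_pow (fun z => 1 - (1 - e) * cI z),
    integral_sub (integrable_const _) (hiI.const_mul _), integral_const_mul, integral_cI] at hint
  have hev : ∀ i : Fin n, ∫ z : Fin n → α ⊕ (α × α), cI (z i) ∂(Measure.pi fun _ => γ) =
      γ.real (Set.range Sum.inr) := fun i => by
    rw [← integral_cI]
    exact integral_comp_eval (μ := fun _ : Fin n => γ) (i := i)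
      measurable_cI.aestronglyMeasurable
  simp only [hev] at hint
  simp at hint
  have eX : ∫ x, f x ∂(Measure.pi fun _ => p) = ∫ z, f (fun i => cX (z i)) ∂Γ := by
    rw [← hPX, integral_map mX.aemeasurable hm.aestronglyMeasurable]
  have eY : ∫ x, f x ∂(Measure.pi fun _ => q) = ∫ z, f (fun i => cY (z i)) ∂Γ := by
    rw [← hPY, integral_map mY.aemeasurable hm.aestronglyMeasurable]
  rw [eX, eY]
  have htv := tv_le_one p q
  have hpow : (1 - (1 - e) * tvDist p q) ^ n ≤
      (1 - (1 - e) * γ.real (Set.range Sum.inr)) ^ n := by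
    apply pow_le_pow_left₀
    · nlinarith
    · nlinarith
  have h2 : n * (e * δ) * γ.real (Set.range Sum.inr) ≤ n * (e * δ) * tvDist p q :=
    mul_le_mul_of_nonneg_left ht (by positivity)
  linarith

/-- **Le Cam's lemma for `(ε, δ)`-DP**: if `M` is `(ε, δ)`-DP, then for any binary test `Ψ`
and any probability distributions `P 0, P 1` on `𝓧^n`,
`max_i P_{X ∼ P i, M}(Ψ(M(X)) ≠ i)
  ≥ (1/2) max { 1 - TV(P 0, P 1), 1 - (1 - e^{-nε} + 2 n e^{-ε} δ) TV(P 0, P 1) }`;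
moreover, when `P i = (p i)^{⊗n}` are product distributions,
`max_i P_{X ∼ P i, M}(Ψ(M(X)) ≠ i)
  ≥ (1/2) ((1 - (1 - e^{-ε}) TV(p 0, p 1))^n - 2 n e^{-ε} δ TV(p 0, p 1))`. -/
theorem lecam_dp [DecidableEq 𝓧] {n : ℕ}
    (M : Kernel (Fin n → 𝓧) 𝓨) [IsMarkovKernel M]
    (ε δ : ℝ) (hε : 0 < ε) (hδ0 : 0 ≤ δ) (hδ1 : δ < 1) (hDP : IsDP M ε δ)
    (Ψ : 𝓨 → Fin 2) (hΨ : Measurable Ψ) :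
    (∀ P : Fin 2 → Measure (Fin n → 𝓧), (∀ i, IsProbabilityMeasure (P i)) →
      (1 / 2 : ℝ) * max (1 - tvDist (P 0) (P 1))
          (1 - (1 - Real.exp (-(n * ε)) + 2 * n * Real.exp (-ε) * δ) * tvDist (P 0) (P 1))
      ≤ max ((∫⁻ x, M x {y | Ψ y ≠ 0} ∂(P 0)).toReal)
            ((∫⁻ x, M x {y | Ψ y ≠ 1} ∂(P 1)).toReal)) ∧
    (∀ p : Fin 2 → Measure 𝓧, (∀ i, IsProbabilityMeasure (p i)) →
      (1 / 2 : ℝ) * ((1 - (1 - Real.exp (-ε)) * tvDist (p 0) (p 1)) ^ n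
          - 2 * n * Real.exp (-ε) * δ * tvDist (p 0) (p 1))
      ≤ max ((∫⁻ x, M x {y | Ψ y ≠ 0} ∂(Measure.pi fun _ : Fin n => p 0)).toReal)
            ((∫⁻ x, M x {y | Ψ y ≠ 1} ∂(Measure.pi fun _ : Fin n => p 1)).toReal)) := by
  set A : Set 𝓨 := {y | Ψ y ≠ 0} with hA
  have hmA : MeasurableSet A := hΨ (MeasurableSet.of_discrete (s := {i : Fin 2 | i ≠ 0}))
  have hB : {y | Ψ y ≠ 1} = Aᶜ := by
    ext y
    simp only [hA, Set.mem_setOf_eq, Set.mem_compl_iff]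
    generalize Ψ y = i
    fin_cases i <;> simp
  set f : (Fin n → 𝓧) → ℝ := fun x => (M x A).toReal with hfdef
  have hfm : Measurable f := (M.measurable_coe hmA).ennreal_toReal
  have h0 : ∀ x, 0 ≤ f x := fun x => ENNReal.toReal_nonneg
  have h1 : ∀ x, f x ≤ 1 := fun x => measureReal_le_one (μ := M x)
  have hf : ∀ x y, hammingDist x y ≤ 1 → f x ≤ Real.exp ε * f y + δ := by
    intro x y hxy
    have h := hDP x y hxy A hmA
    have hfin : ENNReal.ofReal (Real.exp ε) * M y A ≠ ⊤ :=
      ENNReal.mul_ne_top ENNReal.ofReal_ne_top (measure_ne_top _ _)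
    have h' := ENNReal.toReal_mono (ENNReal.add_ne_top.2 ⟨hfin, ENNReal.ofReal_ne_top⟩) h
    rw [ENNReal.toReal_add hfin ENNReal.ofReal_ne_top, ENNReal.toReal_mul,
      ENNReal.toReal_ofReal (Real.exp_pos _).le, ENNReal.toReal_ofReal hδ0] at h'
    exact h'
  have hI0 : ∀ μ : Measure (Fin n → 𝓧), (∫⁻ x, M x A ∂μ).toReal = ∫ x, f x ∂μ := fun μ =>
    (integral_toReal (M.measurable_coe hmA).aemeasurable
      (Filter.Eventually.of_forall fun x => measure_lt_top _ _)).symm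
  have hI1 : ∀ μ : Measure (Fin n → 𝓧), IsProbabilityMeasure μ →
      (∫⁻ x, M x {y | Ψ y ≠ 1} ∂μ).toReal = 1 - ∫ x, f x ∂μ := fun μ hμ => by
    rw [hB, ← integral_toReal (M.measurable_coe hmA.compl).aemeasurable
      (Filter.Eventually.of_forall fun x => measure_lt_top _ _)]
    have : ∀ x, (M x Aᶜ).toReal = 1 - f x := fun x => probReal_compl_eq_one_sub hmA
    simp only [this]
    rw [integral_sub (integrable_const _) (bdd_integrable μ f hfm h0 h1)]
    simp
  constructor
  · intro P hP
    have := hP 0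
    have := hP 1
    rw [hI0, hI1 _ (hP 1)]
    have a1 := part_one (P 0) (P 1) f hfm h0 h1 1 zero_le_one
      (fun x y => by linarith [h0 x, h1 y])
    have hen : Real.exp (-(n * ε)) = Real.exp (-ε) ^ n := by
      rw [← Real.exp_nat_mul]; ring_nf
    have hpos : 0 ≤ n * (Real.exp (-ε) * δ) := by positivity
    have hle1 : Real.exp (-ε) ^ n ≤ 1 :=
      pow_le_one₀ (Real.exp_pos _).le (Real.exp_le_one_iff.2 (by linarith))
    have a2 := part_one (P 0) (P 1) f hfm h0 h1
      (1 - Real.exp (-(n * ε)) + 2 * n * Real.exp (-ε) * δ)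
      (by rw [hen]; nlinarith)
      (fun x y => by
        have := gap_bound f ε δ hε hδ0 h1 hf n x y
          (by simpa using hammingDist_le_card_fintype (x := x) (y := y))
        rw [hen]
        nlinarith)
    have b1 := le_max_left (∫ x, f x ∂P 0) (1 - ∫ x, f x ∂P 1)
    have b2 := le_max_right (∫ x, f x ∂P 0) (1 - ∫ x, f x ∂P 1)
    rw [one_mul] at a1
    have := max_le a1 a2
    linarith
  · intro p hp
    have := hp 0
    have := hp 1
    rw [hI0, hI1 _ inferInstance]
    have a := part_two (n := n) (p 0) (p 1) f hfm h0 h1 ε δ hε hδ0 hf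
    have b1 := le_max_left (∫ x, f x ∂(Measure.pi fun _ : Fin n => p 0))
      (1 - ∫ x, f x ∂(Measure.pi fun _ : Fin n => p 1))
    have b2 := le_max_right (∫ x, f x ∂(Measure.pi fun _ : Fin n => p 0))
      (1 - ∫ x, f x ∂(Measure.pi fun _ : Fin n => p 1))
    have ht0 : 0 ≤ tvDist (p 0) (p 1) := by
      have := le_tv (p 0) (p 1) MeasurableSet.empty
      simpa using this
    have hpos : 0 ≤ n * (Real.exp (-ε) * δ) * tvDist (p 0) (p 1) := by positivity
    linarith
end

section
/- Minimax lower bounds under a quadratic KL control: let (p_θ)_{θ∈Θ} be a family of probability distributions on a measurable space, where Θ ⊆ ℝ^d with d ≥ 66 contains a Euclidean ball of radius r_0, and suppose γ > 0 satisfies KL(p_{θ_1}‖p_{θ_2}) ≤ γ‖θ_2 − θ_1‖² for all θ_1, θ_2 ∈ Θ. Then, for the i.i.d. model (p_θ^{⊗n})_{θ∈Θ}, the Euclidean metric and the squared loss: (i) the (non-private) minimax risk is at least min(r_0/√d, 1/(64√(nγ)))²·d/32; (ii) the minimax risk over ε-DP mechanisms is at least max( min(r_0/√d, 1/(64√(nγ))),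 min(r_0/√d, √d/(64²·√2·nε·√γ)) )²·d/32; (iii) for ρ < 1, the minimax risk over ρ-zCDP mechanisms is at least max( min(r_0/√d, 1/(64√(nγ))), min(r_0/√d, 1/(64²·2√2·n·√(ργ))) )²·d/32. -/
open MeasureTheory ProbabilityTheory Real
open scoped ENNReal NNReal

variable {𝓧 𝓨 : Type*} [MeasurableSpace 𝓧] [MeasurableSpace 𝓨]

open scoped Classical in
/-- The Renyi divergence of order `a`. -/
noncomputable def renyiDiv {α : Type*} [MeasurableSpace α] (a : ℝ) (P Q : Measure α) : ℝ≥0∞ :=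
  if P ≪ Q ∧ ∫⁻ x, (P.rnDeriv Q x) ^ a ∂Q ≠ ⊤ then
    ENNReal.ofReal ((a - 1)⁻¹ * Real.log (∫⁻ x, (P.rnDeriv Q x) ^ a ∂Q).toReal)
  else ⊤

/-- `ρ`-zero-concentrated differential privacy of a Markov kernel. -/
def IsZCDP [DecidableEq 𝓧] {n : ℕ} (M : Kernel (Fin n → 𝓧) 𝓨) (ρ : ℝ) : Prop :=
  ∀ x y : Fin n → 𝓧, hammingDist x y ≤ 1 → ∀ a : ℝ, 1 < a →
    renyiDiv a (M x) (M y) ≤ ENNReal.ofReal (ρ * a)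

open scoped Classical in
/-- The Kullback-Leibler divergence `KL(P ‖ Q) = ∫ log (dP/dQ) dP`. -/
noncomputable def klDiv' {α : Type*} [MeasurableSpace α] (P Q : Measure α) : ℝ≥0∞ :=
  if P ≪ Q ∧ Integrable (llr P Q) P then ENNReal.ofReal (∫ x, llr P Q x ∂P) else ⊤

/-- The minimax risk over randomized mechanisms `M : 𝓧^n → Θ ⊆ ℝ^d` satisfying the privacy
condition `C`, for the i.i.d. model `θ ↦ (p θ)^{⊗n}`, the Euclidean metric and the squared
loss: `inf_{M s.t. C} sup_{θ ∈ Θ} ∫ E_M[dist(M(X), θ)²] d(p θ)^{⊗n}(X)`. -/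
noncomputable def privMinimax (𝓧 : Type*) [MeasurableSpace 𝓧] (d n : ℕ)
    (C : Kernel (Fin n → 𝓧) (EuclideanSpace ℝ (Fin d)) → Prop)
    (Θ : Set (EuclideanSpace ℝ (Fin d)))
    (p : EuclideanSpace ℝ (Fin d) → Measure 𝓧) : ℝ≥0∞ :=
  ⨅ M ∈ {M : Kernel (Fin n → 𝓧) (EuclideanSpace ℝ (Fin d)) |
      IsMarkovKernel M ∧ C M ∧ ∀ x, ∀ᵐ t ∂(M x), t ∈ Θ},
    ⨆ θ ∈ Θ,
      ∫⁻ x, ∫⁻ t, ENNReal.ofReal (dist t θ ^ 2) ∂(M x)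
        ∂(Measure.pi fun _ : Fin n => p θ)

/-- The (non-private) minimax risk over all estimators (measurable maps `𝓧^n → Θ`), for the
i.i.d. model `θ ↦ (p θ)^{⊗n}`, the Euclidean metric and the squared loss. -/
noncomputable def minimaxRisk (𝓧 : Type*) [MeasurableSpace 𝓧] (d n : ℕ)
    (Θ : Set (EuclideanSpace ℝ (Fin d)))
    (p : EuclideanSpace ℝ (Fin d) → Measure 𝓧) : ℝ≥0∞ :=
  ⨅ f ∈ {f : (Fin n → 𝓧) → EuclideanSpace ℝ (Fin d) | Measurable f ∧ ∀ x, f x ∈ Θ},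
    ⨆ θ ∈ Θ,
      ∫⁻ x, ENNReal.ofReal (dist (f x) θ ^ 2) ∂(Measure.pi fun _ : Fin n => p θ)

section Aux

lemma aux_bdd_int {α : Type*} [MeasurableSpace α] {P : Measure α} [IsProbabilityMeasure P]
    {f : α → ℝ} (hf : Measurable f) {C : ℝ} (hC : ∀ x, |f x| ≤ C) : Integrable f P :=
  Integrable.of_bound hf.aestronglyMeasurable C (Filter.Eventually.of_forall hC)

/-- Variational control of the Kullback-Leibler divergence. -/
def KLB {α : Type*} [MeasurableSpace α] (P Q : Measure α) (κ : ℝ) : Prop :=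
  ∀ h : α → ℝ, Measurable h → (∃ C, ∀ x, |h x| ≤ C) →
    ∫ x, h x ∂P ≤ κ + Real.log (∫ x, Real.exp (h x) ∂Q)

lemma aux_exp_bdd {α : Type*} {h : α → ℝ} {C : ℝ} (hC : ∀ x, |h x| ≤ C) (x : α) :
    |Real.exp (h x)| ≤ Real.exp C := by
  rw [abs_of_pos (Real.exp_pos _)]
  exact Real.exp_le_exp.2 ((le_abs_self _).trans (hC x))

lemma KLB_of_klDiv' {α : Type*} [MeasurableSpace α] (P Q : Measure α)
    [IsProbabilityMeasure P] [IsProbabilityMeasure Q] (κ : ℝ) (hκ : 0 ≤ κ)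
    (h : klDiv' P Q ≤ ENNReal.ofReal κ) : KLB P Q κ := by
  unfold klDiv' at h
  split_ifs at h with hc
  · obtain ⟨hac, hllr⟩ := hc
    rw [ENNReal.ofReal_le_ofReal_iff hκ] at h
    rintro f hf ⟨C, hC⟩
    have h1 : Integrable f P := aux_bdd_int hf hC
    have h2 : Integrable (fun x => Real.exp (f x)) Q :=
      aux_bdd_int (hf.exp) (aux_exp_bdd hC)
    have h3 := integral_llr_tilted_right hac h1 h2 hllr
    have : IsProbabilityMeasure (Q.tilted f) := isProbabilityMeasure_tilted h2
    have h4 := InformationTheory.integral_llr_add_sub_measure_univ_nonneg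
      (hac.trans (absolutelyContinuous_tilted h2)) (integrable_llr_tilted_right hac h1 hllr h2)
    simp at h4
    linarith
  · simp at h

lemma KLB_nonneg {α : Type*} [MeasurableSpace α] {P Q : Measure α}
    [IsProbabilityMeasure P] [IsProbabilityMeasure Q] {κ : ℝ} (h : KLB P Q κ) : 0 ≤ κ := by
  have := h (fun _ => 0) measurable_const ⟨0, by simp⟩
  simpa using this

lemma aux_pi_succ {α : Type*} [MeasurableSpace α] (P : Measure α) [IsProbabilityMeasure P] (n : ℕ)
    (f : (Fin (n+1) → α) → ℝ) (hf : Measurable f) (C : ℝ) (hC : ∀ x, |f x| ≤ C) :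
    ∫ x, f x ∂(Measure.pi fun _ : Fin (n+1) => P)
      = ∫ z, f (Fin.cons z.1 z.2) ∂(P.prod (Measure.pi fun _ : Fin n => P)) := by
  have h := ((measurePreserving_piFinSuccAbove (fun _ : Fin (n+1) => P) 0).symm)
  rw [← h.integral_comp']
  simp [MeasurableEquiv.piFinSuccAbove_symm_apply, Fin.insertNthEquiv]

lemma aux_cons_meas {α : Type*} [MeasurableSpace α] (n : ℕ) :
    Measurable (fun z : α × (Fin n → α) => (Fin.cons z.1 z.2 : Fin (n+1) → α)) := by
  have h := (MeasurableEquiv.piFinSuccAbove (fun _ : Fin (n+1) => α) 0).symm.measurable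
  convert h using 2 with z
  simp [MeasurableEquiv.piFinSuccAbove_symm_apply, Fin.insertNthEquiv]

lemma aux_abs_integral_le {α : Type*} [MeasurableSpace α] {P : Measure α} [IsProbabilityMeasure P]
    {f : α → ℝ} {C : ℝ} (hC : ∀ x, |f x| ≤ C) : |∫ x, f x ∂P| ≤ C := by
  have := norm_integral_le_of_norm_le_const (μ := P) (f := f) (C := C)
    (Filter.Eventually.of_forall hC)
  simpa using this

lemma KLB_pi {α : Type*} [MeasurableSpace α] (P Q : Measure α)
    [IsProbabilityMeasure P] [IsProbabilityMeasure Q] (κ : ℝ) (h : KLB P Q κ) (n : ℕ) :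
    KLB (Measure.pi fun _ : Fin n => P) (Measure.pi fun _ : Fin n => Q) (n * κ) := by
  induction n with
  | zero =>
    rintro f hf ⟨C, hC⟩
    simp [Measure.pi_of_empty (fun _ : Fin 0 => P), Measure.pi_of_empty (fun _ : Fin 0 => Q)]
  | succ n ih =>
    rintro f hf ⟨C, hC⟩
    have hcm := aux_cons_meas (α := α) n
    have hg : Measurable (fun z : α × (Fin n → α) => f (Fin.cons z.1 z.2)) := hf.comp hcm
    rw [aux_pi_succ P n f hf C hC, aux_pi_succ Q n _ hf.exp _ (aux_exp_bdd hC)]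
    rw [integral_prod _ (aux_bdd_int hg (fun z => hC _)),
      integral_prod _ (aux_bdd_int (hg.exp) (fun z => aux_exp_bdd hC _))]
    set H : α → ℝ := fun x => Real.log (∫ y, Real.exp (f (Fin.cons x y))
      ∂(Measure.pi fun _ : Fin n => Q)) with hH
    have hmP : Measurable (fun x => ∫ y, f (Fin.cons x y) ∂(Measure.pi fun _ : Fin n => P)) :=
      (hg.stronglyMeasurable.integral_prod_right).measurable
    have hmQ : Measurable (fun x => ∫ y, Real.exp (f (Fin.cons x y))
        ∂(Measure.pi fun _ : Fin n => Q)) :=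
      (hg.exp.stronglyMeasurable.integral_prod_right).measurable
    have hHm : Measurable H := hmQ.log
    have hs : ∀ x : α, Measurable (fun y : Fin n → α => f (Fin.cons x y)) := fun x =>
      hg.comp (measurable_prodMk_left)
    have hlo : ∀ x, Real.exp (-C) ≤ ∫ y, Real.exp (f (Fin.cons x y))
        ∂(Measure.pi fun _ : Fin n => Q) := by
      intro x
      have : ∫ y : Fin n → α, Real.exp (-C) ∂(Measure.pi fun _ : Fin n => Q)
          ≤ ∫ y, Real.exp (f (Fin.cons x y)) ∂(Measure.pi fun _ : Fin n => Q) := by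
        apply integral_mono (integrable_const _)
          (aux_bdd_int (hs x).exp (fun z => aux_exp_bdd hC _))
        intro y
        exact Real.exp_le_exp.2 (abs_le.1 (hC _)).1
      simpa using this
    have hhi : ∀ x, ∫ y, Real.exp (f (Fin.cons x y))
        ∂(Measure.pi fun _ : Fin n => Q) ≤ Real.exp C := fun x =>
      (le_abs_self _).trans (aux_abs_integral_le (fun y => aux_exp_bdd hC _))
    have hHb : ∀ x, |H x| ≤ C := by
      intro x
      have hpos := (Real.exp_pos _).trans_le (hlo x)
      rw [abs_le]
      exact ⟨(Real.le_log_iff_exp_le hpos).2 (hlo x), (Real.log_le_iff_le_exp hpos).2 (hhi x)⟩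
    have e1 : ∀ x, Real.exp (H x) = ∫ y, Real.exp (f (Fin.cons x y))
        ∂(Measure.pi fun _ : Fin n => Q) := fun x =>
      Real.exp_log ((Real.exp_pos _).trans_le (hlo x))
    have e2 := h H hHm ⟨C, hHb⟩
    simp_rw [e1] at e2
    have e3 : ∫ x, ∫ y, f (Fin.cons x y) ∂(Measure.pi fun _ : Fin n => P) ∂P
        ≤ ∫ x, (n * κ + H x) ∂P := by
      apply integral_mono (aux_bdd_int hmP (fun x => aux_abs_integral_le (fun y => hC _)))
        ((integrable_const _).add (aux_bdd_int hHm hHb))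
      intro x
      exact ih _ (hs x) ⟨C, fun y => hC _⟩
    rw [integral_add (integrable_const _) (aux_bdd_int hHm hHb)] at e3
    simp at e3
    push_cast
    linarith

lemma KLB_unit {α : Type*} [MeasurableSpace α] {P Q : Measure α}
    [IsProbabilityMeasure P] [IsProbabilityMeasure Q] {κ : ℝ} (h : KLB P Q κ)
    (g : α → ℝ) (hg : Measurable g) (h0 : ∀ x, 0 ≤ g x) (h1 : ∀ x, g x ≤ 1)
    (l : ℝ) (hl0 : 0 < l) (hl1 : l ≤ 1) :
    ∫ x, g x ∂P ≤ ∫ x, g x ∂Q + (κ / l + l) := by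
  have hgb : ∀ x, |g x| ≤ 1 := fun x => abs_le.2 ⟨by linarith [h0 x], h1 x⟩
  have hb : ∀ x, |l * g x| ≤ 1 := fun x => by
    rw [abs_mul, abs_of_pos hl0]
    nlinarith [hgb x, abs_nonneg (g x)]
  have e := h (fun x => l * g x) (hg.const_mul l) ⟨1, hb⟩
  have e2 : ∫ x, Real.exp (l * g x) ∂Q ≤ ∫ x, ((1 + l ^ 2) + l * g x) ∂Q := by
    apply integral_mono (aux_bdd_int (hg.const_mul l).exp (aux_exp_bdd hb))
      ((integrable_const _).add ((aux_bdd_int hg hgb).const_mul l))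
    intro x
    have := Real.abs_exp_sub_one_sub_id_le (hb x)
    have h2 := (abs_le.1 this).2
    have : (l * g x) ^ 2 ≤ l ^ 2 := by
      have := h0 x; have := h1 x
      rw [mul_pow]; nlinarith [sq_nonneg l, mul_nonneg (sq_nonneg l) (h0 x)]
    simp only [Pi.add_apply]
    linarith
  rw [integral_add (integrable_const _) ((aux_bdd_int hg hgb).const_mul l),
    integral_const_mul] at e2
  rw [integral_const_mul] at e
  simp at e2
  have hpos : 0 < ∫ x, Real.exp (l * g x) ∂Q :=
    integral_exp_pos (aux_bdd_int (hg.const_mul l).exp (aux_exp_bdd hb))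
  have e3 := Real.log_le_sub_one_of_pos hpos
  have e4 : l * ∫ x, g x ∂P ≤ l * (∫ x, g x ∂Q + (κ / l + l)) := by
    have : l * (κ / l) = κ := by field_simp
    nlinarith
  exact le_of_mul_le_mul_left e4 hl0

/-- Total variation control, in terms of oscillation of test functions. -/
def TVB {α : Type*} [MeasurableSpace α] (P Q : Measure α) (t : ℝ) : Prop :=
  ∀ g : α → ℝ, Measurable g → ∀ a b : ℝ, 0 ≤ b → (∀ x, a ≤ g x) → (∀ x, g x ≤ a + b) →
    ∫ x, g x ∂P ≤ ∫ x, g x ∂Q + t * b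

lemma TVB_one {α : Type*} [MeasurableSpace α] (P Q : Measure α)
    [IsProbabilityMeasure P] [IsProbabilityMeasure Q] : TVB P Q 1 := by
  intro g hg a b hb h0 h1
  have hgb : ∀ x, |g x| ≤ |a| + b := fun x => abs_le.2
    ⟨by linarith [h0 x, neg_abs_le a], by linarith [h1 x, le_abs_self a]⟩
  have e1 : ∫ x, g x ∂P ≤ ∫ x, (a + b) ∂P :=
    integral_mono (aux_bdd_int hg hgb) (integrable_const _) h1
  have e2 : ∫ x, a ∂Q ≤ ∫ x, g x ∂Q :=
    integral_mono (integrable_const _) (aux_bdd_int hg hgb) h0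
  simp at e1 e2
  linarith

lemma TVB_of_KLB {α : Type*} [MeasurableSpace α] {P Q : Measure α}
    [IsProbabilityMeasure P] [IsProbabilityMeasure Q] {κ : ℝ} (h : KLB P Q κ) (s : ℝ)
    (hs : 0 < s) (hκ : κ ≤ s ^ 2) : TVB P Q (2 * s) := by
  intro g hg a b hb h0 h1
  by_cases hs1 : 1 ≤ s
  · have := TVB_one P Q g hg a b hb h0 h1
    nlinarith
  push Not at hs1
  rcases hb.eq_or_lt with rfl | hb
  · have := TVB_one P Q g hg a 0 le_rfl h0 h1
    simpa using this
  have hgb : ∀ x, |g x| ≤ |a| + b := fun x => abs_le.2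
    ⟨by linarith [h0 x, neg_abs_le a], by linarith [h1 x, le_abs_self a]⟩
  have e := KLB_unit h (fun x => (g x - a) / b) ((hg.sub_const a).div_const b)
    (fun x => div_nonneg (by linarith [h0 x]) hb.le)
    (fun x => (div_le_one hb).2 (by linarith [h1 x])) s hs hs1.le
  rw [integral_div, integral_div, integral_sub (aux_bdd_int hg hgb) (integrable_const _),
    integral_sub (aux_bdd_int hg hgb) (integrable_const _)] at e
  simp at e
  have e5 : κ / s ≤ s := by rw [div_le_iff₀ hs]; nlinarith
  have e6 : (∫ x, g x ∂P - a) / b ≤ (∫ x, g x ∂Q - a) / b + 2 * s := by linarith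
  rw [div_le_iff₀ hb, add_mul, div_mul_cancel₀ _ hb.ne'] at e6
  linarith

/-- Additive hybrid argument. -/
lemma hybrid_add {α : Type*} [MeasurableSpace α] (P Q : Measure α)
    [IsProbabilityMeasure P] [IsProbabilityMeasure Q] (t b : ℝ) (hb : 0 ≤ b)
    (h : TVB P Q t) (n : ℕ) : ∀ f : (Fin n → α) → ℝ, Measurable f → (∀ x, |f x| ≤ 1) →
      (∀ x i a, f (Function.update x i a) ≤ f x + b) →
      ∫ x, f x ∂(Measure.pi fun _ : Fin n => P)
        ≤ ∫ x, f x ∂(Measure.pi fun _ : Fin n => Q) + n * t * b := by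
  induction n with
  | zero =>
    intro f hf hC ho
    simp [Measure.pi_of_empty (fun _ : Fin 0 => P), Measure.pi_of_empty (fun _ : Fin 0 => Q)]
  | succ n ih =>
    intro f hf hC ho
    have hcm := aux_cons_meas (α := α) n
    have hg : Measurable (fun z : α × (Fin n → α) => f (Fin.cons z.1 z.2)) := hf.comp hcm
    have hgi : ∀ (μ : Measure (α × (Fin n → α))) [IsProbabilityMeasure μ],
      Integrable (fun z : α × (Fin n → α) => f (Fin.cons z.1 z.2)) μ := fun μ _ =>
        aux_bdd_int hg (fun z => hC _)
    rw [aux_pi_succ P n f hf 1 hC, aux_pi_succ Q n f hf 1 hC]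
    have hs : ∀ x : α, Measurable (fun y : Fin n → α => f (Fin.cons x y)) := fun x =>
      hg.comp (measurable_prodMk_left)
    have hs' : ∀ y : Fin n → α, Measurable (fun x : α => f (Fin.cons x y)) := fun y =>
      hg.comp (measurable_prodMk_right)
    have m1 : Measurable (fun x => ∫ y, f (Fin.cons x y) ∂(Measure.pi fun _ : Fin n => P)) :=
      (hg.stronglyMeasurable.integral_prod_right).measurable
    have m2 : Measurable (fun x => ∫ y, f (Fin.cons x y) ∂(Measure.pi fun _ : Fin n => Q)) :=
      (hg.stronglyMeasurable.integral_prod_right).measurable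
    have m3 : Measurable (fun y => ∫ x, f (Fin.cons x y) ∂P) :=
      (hg.stronglyMeasurable.integral_prod_left).measurable
    have m4 : Measurable (fun y => ∫ x, f (Fin.cons x y) ∂Q) :=
      (hg.stronglyMeasurable.integral_prod_left).measurable
    have b1 : ∀ (μ : Measure (Fin n → α)) [IsProbabilityMeasure μ] (x : α),
      |∫ y, f (Fin.cons x y) ∂μ| ≤ 1 := fun μ _ x => aux_abs_integral_le (fun y => hC _)
    have b2 : ∀ (μ : Measure α) [IsProbabilityMeasure μ] (y : Fin n → α),
      |∫ x, f (Fin.cons x y) ∂μ| ≤ 1 := fun μ _ x => aux_abs_integral_le (fun y => hC _)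
    calc ∫ z, f (Fin.cons z.1 z.2) ∂(P.prod (Measure.pi fun _ : Fin n => P))
        = ∫ x, ∫ y, f (Fin.cons x y) ∂(Measure.pi fun _ : Fin n => P) ∂P :=
          integral_prod _ (hgi _)
      _ ≤ ∫ x, (∫ y, f (Fin.cons x y) ∂(Measure.pi fun _ : Fin n => Q) + n * t * b) ∂P := by
          apply integral_mono (aux_bdd_int m1 (b1 _))
            ((aux_bdd_int m2 (b1 _)).add (integrable_const _))
          intro x
          apply ih _ (hs x) (fun y => hC _)
          intro y i a
          rw [Fin.cons_update]
          exact ho _ _ _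
      _ = ∫ x, ∫ y, f (Fin.cons x y) ∂(Measure.pi fun _ : Fin n => Q) ∂P + n * t * b := by
          rw [integral_add (aux_bdd_int m2 (b1 _)) (integrable_const _)]
          simp
      _ = ∫ y, ∫ x, f (Fin.cons x y) ∂P ∂(Measure.pi fun _ : Fin n => Q) + n * t * b := by
          congr 1
          rw [← integral_prod_symm _ (hgi _), integral_prod _ (hgi _)]
      _ ≤ ∫ y, (∫ x, f (Fin.cons x y) ∂Q + t * b) ∂(Measure.pi fun _ : Fin n => Q)
            + n * t * b := by
          refine add_le_add ?_ le_rfl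
          apply integral_mono (aux_bdd_int m3 (b2 _))
            ((aux_bdd_int m4 (b2 _)).add (integrable_const _))
          intro y
          obtain ⟨x0⟩ : Nonempty α := nonempty_of_isProbabilityMeasure P
          have : Nonempty α := ⟨x0⟩
          have hbd : BddBelow (Set.range fun x : α => f (Fin.cons x y)) :=
            ⟨-1, by rintro _ ⟨x, rfl⟩; exact (abs_le.1 (hC _)).1⟩
          apply h _ (hs' y) (⨅ x : α, f (Fin.cons x y)) b hb (fun x => ciInf_le hbd x)
          intro x
          rw [← sub_le_iff_le_add]
          apply le_ciInf
          intro x'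
          have := ho (Fin.cons x' y) 0 x
          rw [Fin.update_cons_zero] at this
          linarith
      _ = ∫ z, f (Fin.cons z.1 z.2) ∂(Q.prod (Measure.pi fun _ : Fin n => Q))
            + (n + 1 : ℕ) * t * b := by
          rw [integral_add (aux_bdd_int m4 (b2 _)) (integrable_const _),
            integral_prod_symm _ (hgi _)]
          simp
          ring

/-- Multiplicative hybrid argument. -/
lemma hybrid_mul {α : Type*} [MeasurableSpace α] (P Q : Measure α)
    [IsProbabilityMeasure P] [IsProbabilityMeasure Q] (t b : ℝ) (ht : 0 ≤ t) (hb : 0 ≤ b)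
    (h : TVB P Q t) (n : ℕ) : ∀ f : (Fin n → α) → ℝ, Measurable f → (∀ x, 0 ≤ f x) →
      (∀ x, f x ≤ 1) →
      (∀ x i a, f (Function.update x i a) ≤ (1 + b) * f x) →
      ∫ x, f x ∂(Measure.pi fun _ : Fin n => P)
        ≤ (1 + t * b) ^ n * ∫ x, f x ∂(Measure.pi fun _ : Fin n => Q) := by
  induction n with
  | zero =>
    intro f hf h0 h1 ho
    simp [Measure.pi_of_empty (fun _ : Fin 0 => P), Measure.pi_of_empty (fun _ : Fin 0 => Q)]
  | succ n ih =>
    intro f hf h0 h1 ho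
    have hC : ∀ x, |f x| ≤ 1 := fun x => abs_le.2 ⟨by linarith [h0 x], h1 x⟩
    have hcm := aux_cons_meas (α := α) n
    have hg : Measurable (fun z : α × (Fin n → α) => f (Fin.cons z.1 z.2)) := hf.comp hcm
    have hgi : ∀ (μ : Measure (α × (Fin n → α))) [IsProbabilityMeasure μ],
      Integrable (fun z : α × (Fin n → α) => f (Fin.cons z.1 z.2)) μ := fun μ _ =>
        aux_bdd_int hg (fun z => hC _)
    rw [aux_pi_succ P n f hf 1 hC, aux_pi_succ Q n f hf 1 hC]
    have hs : ∀ x : α, Measurable (fun y : Fin n → α => f (Fin.cons x y)) := fun x =>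
      hg.comp (measurable_prodMk_left)
    have hs' : ∀ y : Fin n → α, Measurable (fun x : α => f (Fin.cons x y)) := fun y =>
      hg.comp (measurable_prodMk_right)
    have m1 : Measurable (fun x => ∫ y, f (Fin.cons x y) ∂(Measure.pi fun _ : Fin n => P)) :=
      (hg.stronglyMeasurable.integral_prod_right).measurable
    have m2 : Measurable (fun x => ∫ y, f (Fin.cons x y) ∂(Measure.pi fun _ : Fin n => Q)) :=
      (hg.stronglyMeasurable.integral_prod_right).measurable
    have m3 : Measurable (fun y => ∫ x, f (Fin.cons x y) ∂P) :=
      (hg.stronglyMeasurable.integral_prod_left).measurable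
    have m4 : Measurable (fun y => ∫ x, f (Fin.cons x y) ∂Q) :=
      (hg.stronglyMeasurable.integral_prod_left).measurable
    have b1 : ∀ (μ : Measure (Fin n → α)) [IsProbabilityMeasure μ] (x : α),
      |∫ y, f (Fin.cons x y) ∂μ| ≤ 1 := fun μ _ x => aux_abs_integral_le (fun y => hC _)
    have b2 : ∀ (μ : Measure α) [IsProbabilityMeasure μ] (y : Fin n → α),
      |∫ x, f (Fin.cons x y) ∂μ| ≤ 1 := fun μ _ x => aux_abs_integral_le (fun y => hC _)
    calc ∫ z, f (Fin.cons z.1 z.2) ∂(P.prod (Measure.pi fun _ : Fin n => P))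
        = ∫ x, ∫ y, f (Fin.cons x y) ∂(Measure.pi fun _ : Fin n => P) ∂P :=
          integral_prod _ (hgi _)
      _ ≤ ∫ x, ((1 + t * b) ^ n * ∫ y, f (Fin.cons x y) ∂(Measure.pi fun _ : Fin n => Q)) ∂P := by
          apply integral_mono (aux_bdd_int m1 (b1 _))
            ((aux_bdd_int m2 (b1 _)).const_mul _)
          intro x
          apply ih _ (hs x) (fun y => h0 _) (fun y => h1 _)
          intro y i a
          rw [Fin.cons_update]
          exact ho _ _ _
      _ = (1 + t * b) ^ n *
          ∫ y, ∫ x, f (Fin.cons x y) ∂P ∂(Measure.pi fun _ : Fin n => Q) := by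
          rw [integral_const_mul]
          congr 1
          rw [← integral_prod_symm _ (hgi _), integral_prod _ (hgi _)]
      _ ≤ (1 + t * b) ^ n *
          ∫ y, ((1 + t * b) * ∫ x, f (Fin.cons x y) ∂Q) ∂(Measure.pi fun _ : Fin n => Q) := by
          refine mul_le_mul_of_nonneg_left ?_ (by positivity)
          apply integral_mono (aux_bdd_int m3 (b2 _)) ((aux_bdd_int m4 (b2 _)).const_mul _)
          intro y
          have : Nonempty α := nonempty_of_isProbabilityMeasure P
          have hbd : BddBelow (Set.range fun x : α => f (Fin.cons x y)) :=
            ⟨-1, by rintro _ ⟨x, rfl⟩; exact (abs_le.1 (hC _)).1⟩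
          set m := ⨅ x : α, f (Fin.cons x y) with hm
          have hm0 : 0 ≤ m := le_ciInf (fun x => h0 _)
          have hmi : ∀ x, m ≤ f (Fin.cons x y) := fun x => ciInf_le hbd x
          have e := h _ (hs' y) m (b * m) (by positivity) hmi (by
            intro x
            have : f (Fin.cons x y) / (1 + b) ≤ m := by
              apply le_ciInf
              intro x'
              have := ho (Fin.cons x' y) 0 x
              rw [Fin.update_cons_zero] at this
              rw [div_le_iff₀ (by positivity)]
              linarith
            rw [div_le_iff₀ (by positivity)] at this
            linarith)
          have e2 : ∫ x, m ∂Q ≤ ∫ x, f (Fin.cons x y) ∂Q :=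
            integral_mono (integrable_const _) (aux_bdd_int (hs' y) (fun x => hC _)) hmi
          simp only [integral_const, probReal_univ, one_smul] at e2
          have := mul_le_mul_of_nonneg_left e2 (mul_nonneg ht hb)
          simp only
          linarith
      _ = (1 + t * b) ^ (n + 1) *
          ∫ z, f (Fin.cons z.1 z.2) ∂(Q.prod (Measure.pi fun _ : Fin n => Q)) := by
          rw [integral_const_mul, integral_prod_symm _ (hgi _)]
          ring

end Aux
section Aux2

/-- The sign attached to a boolean. -/
noncomputable def sg (b : Bool) : ℝ := if b then 1 else -1

/-- The vertices of the hypercube of center `c` and half-side `τ`. -/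
noncomputable def cube {d : ℕ} (c : EuclideanSpace ℝ (Fin d)) (τ : ℝ) (v : Fin d → Bool) :
    EuclideanSpace ℝ (Fin d) := WithLp.toLp 2 (fun i => c i + τ * sg (v i))

lemma sg_sq (b : Bool) : sg b ^ 2 = 1 := by cases b <;> simp [sg]

lemma cube_apply {d : ℕ} (c : EuclideanSpace ℝ (Fin d)) (τ : ℝ) (v : Fin d → Bool) (i : Fin d) :
    cube c τ v i = c i + τ * sg (v i) := rfl

lemma aux_dist_sq {d : ℕ} (x y : EuclideanSpace ℝ (Fin d)) :
    dist x y ^ 2 = ∑ i, (x i - y i) ^ 2 := by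
  rw [EuclideanSpace.dist_sq_eq]
  simp [Real.dist_eq, sq_abs]

lemma cube_dist_center {d : ℕ} (c : EuclideanSpace ℝ (Fin d)) (τ : ℝ) (v : Fin d → Bool) :
    dist (cube c τ v) c ^ 2 = τ ^ 2 * d := by
  rw [aux_dist_sq]
  simp [cube_apply, mul_pow, sg_sq, mul_comm]

/-- Flip one coordinate. -/
def flipAt {d : ℕ} (i : Fin d) (v : Fin d → Bool) : Fin d → Bool := Function.update v i (!v i)

lemma flipAt_flipAt {d : ℕ} (i : Fin d) (v : Fin d → Bool) : flipAt i (flipAt i v) = v := by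
  simp [flipAt]

lemma cube_dist_flip {d : ℕ} (c : EuclideanSpace ℝ (Fin d)) (τ : ℝ) (v : Fin d → Bool)
    (i : Fin d) : dist (cube c τ (flipAt i v)) (cube c τ v) ^ 2 = 4 * τ ^ 2 := by
  rw [aux_dist_sq, Finset.sum_eq_single i]
  · simp only [cube_apply, flipAt, Function.update_self]
    cases v i <;> simp [sg] <;> ring
  · intro j _ hj
    simp [cube_apply, flipAt, Function.update_of_ne hj]
  · simp

lemma assouad {d : ℕ} (c : EuclideanSpace ℝ (Fin d)) (τ : ℝ) (hτ : 0 < τ)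
    (μ : (Fin d → Bool) → Measure (EuclideanSpace ℝ (Fin d)))
    [∀ v, IsProbabilityMeasure (μ v)] (R : ℝ≥0∞)
    (hR : ∀ v, ∫⁻ t, ENNReal.ofReal (dist t (cube c τ v) ^ 2) ∂(μ v) ≤ R)
    (hTV : ∀ v i S, MeasurableSet S → (μ (flipAt i v)).real S ≤ (μ v).real S + 7 / 8) :
    ENNReal.ofReal (τ ^ 2 * d / 32) ≤ R := by
  by_cases hRt : R = ⊤
  · simp [hRt]
  let W : (Fin d → Bool) → Fin d → Set (EuclideanSpace ℝ (Fin d)) := fun v i =>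
    {t | (t i < c i) = (v i = true)}
  have hco : ∀ i : Fin d, Measurable (fun t : EuclideanSpace ℝ (Fin d) => t i) := fun i => by
    fun_prop
  have hWm : ∀ v i, MeasurableSet (W v i) := by
    intro v i
    have h1 : MeasurableSet {t : EuclideanSpace ℝ (Fin d) | t i < c i} :=
      measurableSet_lt (hco i) measurable_const
    cases hv : v i
    · have : W v i = {t | t i < c i}ᶜ := by ext t; simp [W, hv]
      rw [this]; exact h1.compl
    · have : W v i = {t | t i < c i} := by ext t; simp [W, hv]
      rw [this]; exact h1
  have hWc : ∀ v i, W (flipAt i v) i = (W v i)ᶜ := by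
    intro v i
    ext t
    simp only [W, flipAt, Function.update_self, Set.mem_ofPred_eq, Set.mem_compl_iff]
    cases v i <;> simp
  have hpt : ∀ v i t, (W v i).indicator (fun _ => τ ^ 2) t ≤ (t i - cube c τ v i) ^ 2 := by
    intro v i t
    by_cases ht : t ∈ W v i
    · rw [Set.indicator_of_mem ht, cube_apply]
      simp only [W, Set.mem_ofPred_eq] at ht
      cases hv : v i
      · simp [hv] at ht
        simp [sg]
        nlinarith
      · simp [hv] at ht
        simp [sg]
        nlinarith
    · rw [Set.indicator_of_notMem ht]
      positivity
  have h1 : ∀ v, τ ^ 2 * ∑ i, (μ v).real (W v i) ≤ R.toReal := by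
    intro v
    rw [← ENNReal.ofReal_le_iff_le_toReal hRt]
    refine le_trans ?_ (hR v)
    calc ENNReal.ofReal (τ ^ 2 * ∑ i, (μ v).real (W v i))
        = ∑ i, ENNReal.ofReal (τ ^ 2) * μ v (W v i) := by
          rw [ENNReal.ofReal_mul (by positivity), ENNReal.ofReal_sum_of_nonneg
            (fun i _ => measureReal_nonneg), Finset.mul_sum]
          simp
      _ = ∑ i, ∫⁻ t, (W v i).indicator (fun _ => ENNReal.ofReal (τ ^ 2)) t ∂(μ v) := by
          refine Finset.sum_congr rfl fun i _ => ?_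
          rw [lintegral_indicator_const (hWm v i)]
      _ = ∫⁻ t, ∑ i, (W v i).indicator (fun _ => ENNReal.ofReal (τ ^ 2)) t ∂(μ v) := by
          rw [lintegral_finsetSum]
          intro i _
          exact measurable_const.indicator (hWm v i)
      _ ≤ _ := by
          apply lintegral_mono
          intro t
          simp only
          rw [aux_dist_sq, ENNReal.ofReal_sum_of_nonneg (fun i _ => sq_nonneg _)]
          apply Finset.sum_le_sum
          intro i _
          refine le_trans (le_of_eq ?_) (ENNReal.ofReal_le_ofReal (hpt v i t))
          by_cases ht : t ∈ W v i <;> simp [ht]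
  have h2 : ∀ i, (2 : ℝ) ^ d / 16 ≤ ∑ v, (μ v).real (W v i) := by
    intro i
    have e1 : ∑ v, (μ v).real (W v i) = ∑ v, (μ (flipAt i v)).real (W (flipAt i v) i) :=
      (Equiv.sum_comp (Function.Involutive.toPerm (flipAt i) (flipAt_flipAt i))
        (fun v => (μ v).real (W v i))).symm
    have e2 : ∑ v : Fin d → Bool, (1 / 8 : ℝ)
        ≤ ∑ v, ((μ v).real (W v i) + (μ (flipAt i v)).real (W (flipAt i v) i)) := by
      apply Finset.sum_le_sum
      intro v _
      rw [hWc, probReal_compl_eq_one_sub (hWm v i)]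
      have := hTV v i (W v i) (hWm v i)
      linarith
    rw [Finset.sum_add_distrib, ← e1] at e2
    simp at e2
    linarith
  have h3 : ∑ v : Fin d → Bool, τ ^ 2 * ∑ i, (μ v).real (W v i)
      ≤ ∑ v : Fin d → Bool, R.toReal := Finset.sum_le_sum fun v _ => h1 v
  rw [← Finset.mul_sum, Finset.sum_comm] at h3
  have h4 : ∑ i : Fin d, (2 : ℝ) ^ d / 16 ≤ ∑ i, ∑ v, (μ v).real (W v i) :=
    Finset.sum_le_sum fun i _ => h2 i
  simp at h3 h4
  rw [ENNReal.ofReal_le_iff_le_toReal hRt]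
  have h5 := (mul_le_mul_of_nonneg_left h4 (sq_nonneg τ)).trans h3
  have h6 : (2 : ℝ) ^ d * (τ ^ 2 * d / 16) ≤ 2 ^ d * R.toReal := by
    refine le_trans (le_of_eq ?_) h5
    ring
  have h7 := le_of_mul_le_mul_left h6 (by positivity)
  have : 0 ≤ τ ^ 2 * d := by positivity
  linarith

lemma aux_num (d : ℕ) (hd : 0 < d) :
    Real.exp (d / 100) * (1 + Real.exp (-1)) ^ d < 2 ^ d * Real.exp (-(d / 32)) := by
  have h1 : Real.exp (-1) < 1 / 2 := by
    rw [Real.exp_neg, inv_eq_one_div]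
    exact one_div_lt_one_div_of_lt (by norm_num) Real.exp_one_gt_two
  have h2 : Real.exp (1 / 100 + 1 / 32) ≤ 5 / 4 := by
    have := Real.exp_bound_div_one_sub_of_interval (x := 1 / 100 + 1 / 32) (by norm_num)
      (by norm_num)
    refine this.trans (by norm_num)
  have h3 : Real.exp (1 / 100 + 1 / 32) * (1 + Real.exp (-1)) < 2 := by
    nlinarith [Real.exp_pos (-1), Real.exp_pos (1 / 100 + 1 / 32)]
  have h4 := pow_lt_pow_left₀ h3 (by positivity) hd.ne'
  rw [mul_pow, ← Real.exp_nat_mul] at h4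
  have e : Real.exp ((d : ℝ) / 100)
      = Real.exp (d * (1 / 100 + 1 / 32)) * Real.exp (-(d / 32)) := by
    rw [← Real.exp_add]; congr 1; ring
  rw [e]
  nlinarith [Real.exp_pos (-((d : ℝ) / 32))]

lemma aux_coord (u : ℝ) :
    Real.exp (-(u - 1) ^ 2) + Real.exp (-(u + 1) ^ 2) ≤ 1 + Real.exp (-1) := by
  rcases le_total 0 u with h | h
  · apply add_le_add
    · rw [Real.exp_le_one_iff]; nlinarith [sq_nonneg (u - 1)]
    · apply Real.exp_le_exp.2; nlinarith
  · rw [add_comm]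
    apply add_le_add
    · rw [Real.exp_le_one_iff]; nlinarith [sq_nonneg (u + 1)]
    · apply Real.exp_le_exp.2; nlinarith

lemma aux_cube_sum {d : ℕ} (c : EuclideanSpace ℝ (Fin d)) (τ : ℝ) (hτ : 0 < τ)
    (t : EuclideanSpace ℝ (Fin d)) :
    ∑ v, Real.exp (-(dist t (cube c τ v) ^ 2 / τ ^ 2)) ≤ (1 + Real.exp (-1)) ^ d := by
  have e : ∀ v, Real.exp (-(dist t (cube c τ v) ^ 2 / τ ^ 2))
      = ∏ i, Real.exp (-((t i - c i) / τ - sg (v i)) ^ 2) := by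
    intro v
    rw [← Real.exp_sum, aux_dist_sq, Finset.sum_div, ← Finset.sum_neg_distrib]
    congr 1
    refine Finset.sum_congr rfl fun i _ => ?_
    rw [cube_apply]
    field_simp
    ring
  simp_rw [e]
  rw [← Fintype.piFinset_univ, ← Finset.prod_univ_sum (fun _ => Finset.univ)
    (fun i b => Real.exp (-((t i - c i) / τ - sg b) ^ 2))]
  calc _ ≤ ∏ i : Fin d, (1 + Real.exp (-1)) := by
        apply Finset.prod_le_prod
        · intro i _; positivity
        · intro i _
          simpa [sg] using aux_coord ((t i - c i) / τ)
    _ = _ := by simp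

lemma packing {d : ℕ} (hd : 0 < d) (c : EuclideanSpace ℝ (Fin d)) (τ : ℝ) (hτ : 0 < τ)
    (μ : (Fin d → Bool) → Measure (EuclideanSpace ℝ (Fin d)))
    (ν : Measure (EuclideanSpace ℝ (Fin d)))
    [∀ v, IsProbabilityMeasure (μ v)] [IsProbabilityMeasure ν] (R : ℝ≥0∞)
    (hR : ∀ v, ∫⁻ t, ENNReal.ofReal (dist t (cube c τ v) ^ 2) ∂(μ v) ≤ R)
    (K : ℝ) (hK0 : 0 ≤ K) (hK : K ≤ Real.exp (d / 100))
    (hTV : ∀ v S, MeasurableSet S → (μ v).real S ≤ K * ν.real S) :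
    ENNReal.ofReal (τ ^ 2 * d / 32) ≤ R := by
  by_contra hlt
  push Not at hlt
  have hRt : R ≠ ⊤ := (hlt.trans ENNReal.ofReal_lt_top).ne
  set a : ℝ := d / 32 with ha
  have ha0 : 0 ≤ a := by positivity
  have hle : ∀ v, μ v ≤ ENNReal.ofReal K • ν := by
    intro v
    refine Measure.le_intro fun S hS _ => ?_
    have := hTV v S hS
    rw [Measure.smul_apply, smul_eq_mul, ← ofReal_measureReal (μ := μ v) (s := S),
      ← ofReal_measureReal (μ := ν) (s := S), ← ENNReal.ofReal_mul hK0]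
    exact ENNReal.ofReal_le_ofReal this
  have hdm : ∀ v, Measurable fun t : EuclideanSpace ℝ (Fin d) =>
      dist t (cube c τ v) ^ 2 := fun v => by fun_prop
  have h1 : ∀ v, ENNReal.ofReal (Real.exp (-a))
      ≤ ∫⁻ t, ENNReal.ofReal (Real.exp (-(dist t (cube c τ v) ^ 2 / τ ^ 2))) ∂(μ v) := by
    intro v
    have e1 : ∫⁻ t, ENNReal.ofReal (Real.exp (-a) * (1 + a)) ∂(μ v)
        ≤ ∫⁻ t, (ENNReal.ofReal (Real.exp (-(dist t (cube c τ v) ^ 2 / τ ^ 2)))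
          + ENNReal.ofReal (Real.exp (-a) / τ ^ 2)
            * ENNReal.ofReal (dist t (cube c τ v) ^ 2)) ∂(μ v) := by
      apply lintegral_mono
      intro t
      simp only
      rw [← ENNReal.ofReal_mul (by positivity), ← ENNReal.ofReal_add (by positivity)
        (by positivity)]
      apply ENNReal.ofReal_le_ofReal
      set D := dist t (cube c τ v) ^ 2 / τ ^ 2 with hD
      have e2 : Real.exp (-a) / τ ^ 2 * dist t (cube c τ v) ^ 2 = Real.exp (-a) * D := by
        rw [hD]; ring
      rw [e2]
      have e3 : Real.exp (-D) = Real.exp (-a) * Real.exp (a - D) := by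
        rw [← Real.exp_add]; congr 1; ring
      rw [e3]
      have e4 := Real.add_one_le_exp (a - D)
      nlinarith [Real.exp_pos (-a)]
    rw [lintegral_add_left (by fun_prop), lintegral_const_mul _ (by fun_prop)] at e1
    simp only [lintegral_const, measure_univ, mul_one] at e1
    have e5 : ENNReal.ofReal (Real.exp (-a) / τ ^ 2)
        * ∫⁻ t, ENNReal.ofReal (dist t (cube c τ v) ^ 2) ∂(μ v)
        ≤ ENNReal.ofReal (Real.exp (-a) * a) := by
      calc _ ≤ ENNReal.ofReal (Real.exp (-a) / τ ^ 2) * ENNReal.ofReal (τ ^ 2 * d / 32) := by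
            gcongr
            exact (hR v).trans hlt.le
        _ = _ := by
            rw [← ENNReal.ofReal_mul (by positivity)]
            congr 1
            rw [ha]
            field_simp
    have e6 := e1.trans (add_le_add le_rfl e5)
    rw [mul_add, mul_one, ENNReal.ofReal_add (by positivity) (by positivity)] at e6
    exact (ENNReal.add_le_add_iff_right ENNReal.ofReal_ne_top).1 e6
  have h2 : ∑ v : Fin d → Bool, ENNReal.ofReal (Real.exp (-a))
      ≤ ENNReal.ofReal K * ENNReal.ofReal ((1 + Real.exp (-1)) ^ d) := by
    calc _ ≤ ∑ v : Fin d → Bool, ENNReal.ofReal K *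
          ∫⁻ t, ENNReal.ofReal (Real.exp (-(dist t (cube c τ v) ^ 2 / τ ^ 2))) ∂ν := by
          apply Finset.sum_le_sum
          intro v _
          refine (h1 v).trans ?_
          refine (lintegral_mono' (hle v) le_rfl).trans ?_
          rw [lintegral_smul_measure, smul_eq_mul]
      _ = ENNReal.ofReal K * ∫⁻ t, ∑ v : Fin d → Bool,
          ENNReal.ofReal (Real.exp (-(dist t (cube c τ v) ^ 2 / τ ^ 2))) ∂ν := by
          rw [lintegral_finsetSum _ (fun v _ => by fun_prop), Finset.mul_sum]
      _ ≤ ENNReal.ofReal K * ∫⁻ t, ENNReal.ofReal ((1 + Real.exp (-1)) ^ d) ∂ν := by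
          gcongr with t
          rw [← ENNReal.ofReal_sum_of_nonneg (fun _ _ => (Real.exp_pos _).le)]
          exact ENNReal.ofReal_le_ofReal (aux_cube_sum c τ hτ t)
      _ = _ := by simp
  rw [← ENNReal.ofReal_sum_of_nonneg (fun _ _ => (Real.exp_pos _).le),
    ← ENNReal.ofReal_mul hK0, ENNReal.ofReal_le_ofReal_iff (by positivity)] at h2
  simp at h2
  have h3 := aux_num d hd
  have h4 : K * (1 + Real.exp (-1)) ^ d ≤ Real.exp (d / 100) * (1 + Real.exp (-1)) ^ d := by
    gcongr
  rw [← ha] at h3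
  linarith

lemma zcdp_tv {α : Type*} [MeasurableSpace α] (P Q : Measure α) [IsProbabilityMeasure P]
    [IsProbabilityMeasure Q] (ρ : ℝ) (h0 : 0 < ρ) (h1 : ρ < 1)
    (h : renyiDiv 2 P Q ≤ ENNReal.ofReal (ρ * 2)) (S : Set α) (hS : MeasurableSet S) :
    P.real S ≤ Q.real S + 4 * Real.sqrt ρ := by
  unfold renyiDiv at h
  split_ifs at h with hc
  swap
  · simp at h
  obtain ⟨hac, hfin⟩ := hc
  rw [ENNReal.ofReal_le_ofReal_iff (by positivity)] at h
  set I := ∫⁻ x, (P.rnDeriv Q x) ^ (2 : ℝ) ∂Q with hI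
  have hIe : I.toReal ≤ Real.exp (ρ * 2) := by
    rcases (ENNReal.toReal_nonneg (a := I)).eq_or_lt with h' | h'
    · rw [← h']; positivity
    · rw [← Real.log_le_iff_le_exp h']
      norm_num at h
      linarith
  have he : Real.exp (ρ * 2) ≤ 1 + 7 * ρ := by
    have hcv := convexOn_exp.2 (Set.mem_univ (0 : ℝ)) (Set.mem_univ (2 : ℝ))
      (by linarith : 0 ≤ 1 - ρ) h0.le (by ring)
    simp only [smul_eq_mul, mul_zero, zero_add, Real.exp_zero, mul_one] at hcv
    have e2 : Real.exp 2 ≤ 8 := by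
      have : Real.exp 2 = Real.exp 1 ^ 2 := by rw [← Real.exp_nat_mul]; norm_num
      rw [this]
      nlinarith [Real.exp_one_lt_d9, Real.exp_pos 1]
    nlinarith
  set s := Real.sqrt ρ with hs
  have hs0 : 0 < s := Real.sqrt_pos.2 h0
  have hss : s ^ 2 = ρ := Real.sq_sqrt h0.le
  have hrm : Measurable (P.rnDeriv Q) := Measure.measurable_rnDeriv P Q
  have hmain : ∫⁻ x, (ENNReal.ofReal (2 * s) * S.indicator (P.rnDeriv Q) x
      + 2 * P.rnDeriv Q x) ∂Q ≤ ∫⁻ x, (S.indicator (fun _ => ENNReal.ofReal (2 * s)) x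
        + ((P.rnDeriv Q x) ^ (2 : ℝ) + ENNReal.ofReal (s ^ 2 + 1))) ∂Q := by
    apply lintegral_mono_ae
    filter_upwards [Measure.rnDeriv_lt_top P Q] with x hx
    obtain ⟨r, hr0, hr⟩ : ∃ r : ℝ, 0 ≤ r ∧ P.rnDeriv Q x = ENNReal.ofReal r :=
      ⟨(P.rnDeriv Q x).toReal, ENNReal.toReal_nonneg, (ENNReal.ofReal_toReal hx.ne).symm⟩
    have h2 : (2 : ℝ≥0∞) = ENNReal.ofReal 2 := by simp
    by_cases hxS : x ∈ S
    · rw [Set.indicator_of_mem hxS, Set.indicator_of_mem hxS, hr, ENNReal.rpow_two, h2,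
        ← ENNReal.ofReal_pow hr0, ← ENNReal.ofReal_mul (by positivity),
        ← ENNReal.ofReal_mul (by positivity), ← ENNReal.ofReal_add (by positivity)
        (by positivity), ← ENNReal.ofReal_add (by positivity)
        (by positivity), ← ENNReal.ofReal_add (by positivity)
        (by positivity)]
      apply ENNReal.ofReal_le_ofReal
      nlinarith [sq_nonneg (r - 1 - s)]
    · rw [Set.indicator_of_notMem hxS, Set.indicator_of_notMem hxS, hr, ENNReal.rpow_two, h2,
        ← ENNReal.ofReal_pow hr0, 
        ← ENNReal.ofReal_mul (by positivity), ← ENNReal.ofReal_add (by positivity)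
        (by positivity), mul_zero, zero_add, zero_add]
      apply ENNReal.ofReal_le_ofReal
      nlinarith [sq_nonneg (r - 1), sq_nonneg s]
  rw [lintegral_add_left ((hrm.indicator hS).const_mul _), lintegral_const_mul _ hrm,
    lintegral_const_mul _ (hrm.indicator hS), lintegral_indicator hS,
    Measure.setLIntegral_rnDeriv hac, Measure.lintegral_rnDeriv hac,
    lintegral_add_left (measurable_const.indicator hS), lintegral_indicator_const hS,
    lintegral_add_left (hrm.pow_const _), ← hI] at hmain
  simp only [lintegral_const, measure_univ, mul_one] at hmain
  have h2 : (2 : ℝ≥0∞) = ENNReal.ofReal 2 := by simp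
  rw [← ofReal_measureReal (μ := P) (s := S), ← ofReal_measureReal (μ := Q) (s := S),
    ← ENNReal.ofReal_toReal hfin, h2, ← ENNReal.ofReal_mul (by positivity),
    ← ENNReal.ofReal_mul (by positivity), ← ENNReal.ofReal_add (by positivity)
        (by positivity), ← ENNReal.ofReal_add (by positivity)
        (by positivity), ← ENNReal.ofReal_add (by positivity)
        (by positivity), ENNReal.ofReal_le_ofReal_iff (by positivity)] at hmain
  have h8 : s * P.real S ≤ s * (Q.real S + 4 * s) := by nlinarith
  exact le_of_mul_le_mul_left h8 hs0

end Aux2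
section Aux3

lemma bind_real {α β : Type*} [MeasurableSpace α] [MeasurableSpace β] (M : Kernel α β)
    [IsMarkovKernel M] (P : Measure α) [IsProbabilityMeasure P] (S : Set β)
    (hS : MeasurableSet S) : (P.bind M).real S = ∫ x, (M x).real S ∂P := by
  rw [measureReal_def, Measure.bind_apply hS M.measurable.aemeasurable]
  rw [integral_eq_lintegral_of_nonneg_ae (Filter.Eventually.of_forall fun _ => measureReal_nonneg)
    ((M.measurable_coe hS).ennreal_toReal.aestronglyMeasurable)]
  simp

/-- The worst-case risk of a mechanism. -/
noncomputable def wrisk {𝓧 : Type*} [MeasurableSpace 𝓧] {d n : ℕ}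
    (M : Kernel (Fin n → 𝓧) (EuclideanSpace ℝ (Fin d)))
    (Θ : Set (EuclideanSpace ℝ (Fin d)))
    (p : EuclideanSpace ℝ (Fin d) → Measure 𝓧) : ℝ≥0∞ :=
  ⨆ θ ∈ Θ, ∫⁻ x, ∫⁻ t, ENNReal.ofReal (dist t θ ^ 2) ∂(M x)
        ∂(Measure.pi fun _ : Fin n => p θ)

lemma cube_mem {d : ℕ} {Θ : Set (EuclideanSpace ℝ (Fin d))} {r₀ : ℝ} (hr₀ : 0 < r₀)
    {c : EuclideanSpace ℝ (Fin d)} (hball : Metric.closedBall c r₀ ⊆ Θ) {τ : ℝ}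
    (hτ : τ ^ 2 * d ≤ r₀ ^ 2) (v : Fin d → Bool) : cube c τ v ∈ Θ := by
  apply hball
  rw [Metric.mem_closedBall]
  rw [← cube_dist_center c τ v] at hτ
  exact le_of_sq_le_sq hτ hr₀.le

lemma le_wrisk {𝓧 : Type*} [MeasurableSpace 𝓧] {d n : ℕ}
    (M : Kernel (Fin n → 𝓧) (EuclideanSpace ℝ (Fin d)))
    (Θ : Set (EuclideanSpace ℝ (Fin d)))
    (p : EuclideanSpace ℝ (Fin d) → Measure 𝓧) (θ : EuclideanSpace ℝ (Fin d)) (hθ : θ ∈ Θ) :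
    ∫⁻ t, ENNReal.ofReal (dist t θ ^ 2) ∂((Measure.pi fun _ : Fin n => p θ).bind M)
      ≤ wrisk M Θ p := by
  rw [Measure.lintegral_bind M.measurable.aemeasurable (by fun_prop)]
  exact le_iSup₂ (f := fun θ (_ : θ ∈ Θ) => ∫⁻ x, ∫⁻ t, ENNReal.ofReal (dist t θ ^ 2) ∂(M x)
        ∂(Measure.pi fun _ : Fin n => p θ)) θ hθ

lemma core_assouad {𝓧 : Type*} [MeasurableSpace 𝓧] {d n : ℕ}
    (M : Kernel (Fin n → 𝓧) (EuclideanSpace ℝ (Fin d))) [IsMarkovKernel M]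
    (Θ : Set (EuclideanSpace ℝ (Fin d)))
    (p : EuclideanSpace ℝ (Fin d) → Measure 𝓧)
    (hprob : ∀ θ ∈ Θ, IsProbabilityMeasure (p θ))
    (r₀ : ℝ) (hr₀ : 0 < r₀) (c : EuclideanSpace ℝ (Fin d))
    (hball : Metric.closedBall c r₀ ⊆ Θ) (τ : ℝ) (hτ0 : 0 < τ) (hτ : τ ^ 2 * d ≤ r₀ ^ 2)
    (hdiff : ∀ θ₁ ∈ Θ, ∀ θ₂ ∈ Θ, dist θ₁ θ₂ ^ 2 = 4 * τ ^ 2 → ∀ S, MeasurableSet S →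
      ∫ x, (M x).real S ∂(Measure.pi fun _ : Fin n => p θ₁)
        ≤ ∫ x, (M x).real S ∂(Measure.pi fun _ : Fin n => p θ₂) + 7 / 8) :
    ENNReal.ofReal (τ ^ 2 * d / 32) ≤ wrisk M Θ p := by
  have hm := cube_mem hr₀ hball hτ
  have : ∀ v, IsProbabilityMeasure (p (cube c τ v)) := fun v => hprob _ (hm v)
  apply assouad c τ hτ0 (fun v => (Measure.pi fun _ : Fin n => p (cube c τ v)).bind M)
  · intro v
    exact le_wrisk M Θ p _ (hm v)
  · intro v i S hS
    rw [bind_real M _ S hS, bind_real M _ S hS]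
    exact hdiff _ (hm _) _ (hm _) (cube_dist_flip c τ v i) S hS

lemma core_packing {𝓧 : Type*} [MeasurableSpace 𝓧] {d n : ℕ} (hd : 0 < d)
    (M : Kernel (Fin n → 𝓧) (EuclideanSpace ℝ (Fin d))) [IsMarkovKernel M]
    (Θ : Set (EuclideanSpace ℝ (Fin d)))
    (p : EuclideanSpace ℝ (Fin d) → Measure 𝓧)
    (hprob : ∀ θ ∈ Θ, IsProbabilityMeasure (p θ))
    (r₀ : ℝ) (hr₀ : 0 < r₀) (c : EuclideanSpace ℝ (Fin d))
    (hball : Metric.closedBall c r₀ ⊆ Θ) (τ : ℝ) (hτ0 : 0 < τ) (hτ : τ ^ 2 * d ≤ r₀ ^ 2)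
    (K : ℝ) (hK0 : 0 ≤ K) (hK : K ≤ Real.exp (d / 100))
    (hdiff : ∀ θ₁ ∈ Θ, ∀ θ₂ ∈ Θ, dist θ₁ θ₂ ^ 2 = τ ^ 2 * d → ∀ S, MeasurableSet S →
      ∫ x, (M x).real S ∂(Measure.pi fun _ : Fin n => p θ₁)
        ≤ K * ∫ x, (M x).real S ∂(Measure.pi fun _ : Fin n => p θ₂)) :
    ENNReal.ofReal (τ ^ 2 * d / 32) ≤ wrisk M Θ p := by
  have hm := cube_mem hr₀ hball hτ
  have hc : c ∈ Θ := hball (Metric.mem_closedBall_self hr₀.le)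
  have : ∀ v, IsProbabilityMeasure (p (cube c τ v)) := fun v => hprob _ (hm v)
  have : IsProbabilityMeasure (p c) := hprob _ hc
  apply packing hd c τ hτ0 (fun v => (Measure.pi fun _ : Fin n => p (cube c τ v)).bind M)
    ((Measure.pi fun _ : Fin n => p c).bind M) _ _ K hK0 hK
  · intro v S hS
    rw [bind_real M _ S hS, bind_real M _ S hS]
    exact hdiff _ (hm _) _ hc (cube_dist_center c τ v) S hS
  · intro v
    exact le_wrisk M Θ p _ (hm v)

lemma aux_tau_ball {d : ℕ} (hd : 0 < d) {r₀ τ : ℝ} (hτ0 : 0 < τ) 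
    (h : τ ≤ r₀ / Real.sqrt d) : τ ^ 2 * d ≤ r₀ ^ 2 := by
  have hd' : (0 : ℝ) < d := by exact_mod_cast hd
  rw [le_div_iff₀ (Real.sqrt_pos.2 hd')] at h
  have h2 : (τ * Real.sqrt d) ^ 2 ≤ r₀ ^ 2 := pow_le_pow_left₀ (by positivity) h 2
  rwa [mul_pow, Real.sq_sqrt hd'.le] at h2

lemma hamming_update {𝓧 : Type*} [DecidableEq 𝓧] {n : ℕ} (x : Fin n → 𝓧) (i : Fin n) (a : 𝓧) :
    hammingDist (Function.update x i a) x ≤ 1 := by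
  unfold hammingDist
  calc _ ≤ ({i} : Finset (Fin n)).card := by
        apply Finset.card_le_card
        intro j hj
        simp only [Finset.mem_filter, Finset.mem_univ, true_and] at hj
        simp only [Finset.mem_singleton]
        by_contra hne
        exact hj (Function.update_of_ne hne _ _)
    _ = 1 := by simp

lemma test_meas {α β : Type*} [MeasurableSpace α] [MeasurableSpace β] (M : Kernel α β)
    (S : Set β) (hS : MeasurableSet S) : Measurable fun x => (M x).real S :=
  (M.measurable_coe hS).ennreal_toReal

lemma risk_nonpriv {𝓧 : Type*} [MeasurableSpace 𝓧] {d n : ℕ} (hd : 66 ≤ d)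
    (Θ : Set (EuclideanSpace ℝ (Fin d)))
    (p : EuclideanSpace ℝ (Fin d) → Measure 𝓧)
    (hprob : ∀ θ ∈ Θ, IsProbabilityMeasure (p θ))
    (r₀ : ℝ) (hr₀ : 0 < r₀) (c : EuclideanSpace ℝ (Fin d))
    (hball : Metric.closedBall c r₀ ⊆ Θ)
    (γ : ℝ) (hγ : 0 < γ)
    (hKL : ∀ θ₁ ∈ Θ, ∀ θ₂ ∈ Θ,
      klDiv' (p θ₁) (p θ₂) ≤ ENNReal.ofReal (γ * dist θ₂ θ₁ ^ 2))
    (M : Kernel (Fin n → 𝓧) (EuclideanSpace ℝ (Fin d))) [IsMarkovKernel M] :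
    ENNReal.ofReal
        (min (r₀ / Real.sqrt d) (1 / (64 * Real.sqrt (n * γ))) ^ 2 * d / 32) ≤ wrisk M Θ p := by
  have hdp : 0 < d := by omega
  set τ := min (r₀ / Real.sqrt d) (1 / (64 * Real.sqrt (n * γ))) with hτ
  have hτnn : 0 ≤ τ := le_min (by positivity) (by positivity)
  rcases hτnn.eq_or_lt with h0 | h0
  · rw [← h0]; simp
  apply core_assouad M Θ p hprob r₀ hr₀ c hball τ h0 (aux_tau_ball hdp h0 (min_le_left _ _))
  intro θ₁ h1 θ₂ h2 hd12 S hS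
  have := hprob _ h1
  have := hprob _ h2
  have hk := KLB_of_klDiv' (p θ₁) (p θ₂) _ (by positivity) (hKL _ h1 _ h2)
  have hk2 := KLB_pi _ _ _ hk n
  have hk3 := KLB_unit hk2 _ (test_meas M S hS) (fun x => measureReal_nonneg)
    (fun x => measureReal_le_one) (1 / 2) (by norm_num) (by norm_num)
  rw [dist_comm, hd12] at hk3
  have hle : τ ≤ 1 / (64 * Real.sqrt (n * γ)) := min_le_right _ _
  have hb : n * γ * τ ^ 2 ≤ 1 / 4096 := by
    have hnn : (0 : ℝ) ≤ n * γ := by positivity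
    have h5 : τ * (64 * Real.sqrt (n * γ)) ≤ 1 :=
      mul_le_of_le_div₀ zero_le_one (by positivity) hle
    have h6 : (τ * (64 * Real.sqrt (n * γ))) ^ 2 ≤ 1 ^ 2 :=
      pow_le_pow_left₀ (by positivity) h5 2
    rw [mul_pow, mul_pow, Real.sq_sqrt hnn] at h6
    linarith
  linarith

lemma risk_zcdp {𝓧 : Type*} [MeasurableSpace 𝓧] [DecidableEq 𝓧] {d n : ℕ} (hd : 66 ≤ d)
    (Θ : Set (EuclideanSpace ℝ (Fin d)))
    (p : EuclideanSpace ℝ (Fin d) → Measure 𝓧)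
    (hprob : ∀ θ ∈ Θ, IsProbabilityMeasure (p θ))
    (r₀ : ℝ) (hr₀ : 0 < r₀) (c : EuclideanSpace ℝ (Fin d))
    (hball : Metric.closedBall c r₀ ⊆ Θ)
    (γ : ℝ) (hγ : 0 < γ)
    (hKL : ∀ θ₁ ∈ Θ, ∀ θ₂ ∈ Θ,
      klDiv' (p θ₁) (p θ₂) ≤ ENNReal.ofReal (γ * dist θ₂ θ₁ ^ 2))
    (M : Kernel (Fin n → 𝓧) (EuclideanSpace ℝ (Fin d))) [IsMarkovKernel M]
    (ρ : ℝ) (hρ0 : 0 < ρ) (hρ1 : ρ < 1) (hM : IsZCDP M ρ) :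
    ENNReal.ofReal
        (min (r₀ / Real.sqrt d) (1 / (64 ^ 2 * 2 * Real.sqrt 2 * n * Real.sqrt (ρ * γ))) ^ 2
          * d / 32) ≤ wrisk M Θ p := by
  have hdp : 0 < d := by omega
  set τ := min (r₀ / Real.sqrt d) (1 / (64 ^ 2 * 2 * Real.sqrt 2 * n * Real.sqrt (ρ * γ)))
    with hτ
  have hτnn : 0 ≤ τ := le_min (by positivity) (by positivity)
  rcases hτnn.eq_or_lt with h0 | h0
  · rw [← h0]; simp
  apply core_assouad M Θ p hprob r₀ hr₀ c hball τ h0 (aux_tau_ball hdp h0 (min_le_left _ _))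
  intro θ₁ h1 θ₂ h2 hd12 S hS
  have := hprob _ h1
  have := hprob _ h2
  have hk := KLB_of_klDiv' (p θ₁) (p θ₂) _ (by positivity) (hKL _ h1 _ h2)
  rw [dist_comm, hd12] at hk
  have hγs : 0 < Real.sqrt γ := Real.sqrt_pos.2 hγ
  have htv := TVB_of_KLB hk (2 * τ * Real.sqrt γ) (by positivity) (by
    rw [mul_pow, Real.sq_sqrt hγ.le]; linarith)
  have hh := hybrid_add _ _ _ (4 * Real.sqrt ρ) (by positivity) htv n
    (fun x => (M x).real S) (test_meas M S hS)
    (fun x => by rw [abs_of_nonneg measureReal_nonneg]; exact measureReal_le_one)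
    (fun x i a => zcdp_tv _ _ ρ hρ0 hρ1 (hM _ _ (hamming_update x i a) 2 (by norm_num)) S hS)
  refine hh.trans ?_
  have hle : τ ≤ 1 / (64 ^ 2 * 2 * Real.sqrt 2 * n * Real.sqrt (ρ * γ)) := min_le_right _ _
  have h5 : τ * (64 ^ 2 * 2 * Real.sqrt 2 * n * Real.sqrt (ρ * γ)) ≤ 1 :=
      mul_le_of_le_div₀ zero_le_one (by positivity) hle
  rw [Real.sqrt_mul hρ0.le] at h5
  have hs2 : 1 ≤ Real.sqrt 2 := Real.one_le_sqrt.2 (by norm_num)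
  set Z := τ * n * (Real.sqrt ρ * Real.sqrt γ) with hZ
  have hZ0 : 0 ≤ Z := by positivity
  have h6 : 64 ^ 2 * 2 * Real.sqrt 2 * Z ≤ 1 := by
    rw [hZ]; linarith
  have h7 : n * (2 * (2 * τ * Real.sqrt γ)) * (4 * Real.sqrt ρ) = 16 * Z := by
    rw [hZ]; ring
  rw [h7]
  nlinarith

lemma risk_dp {𝓧 : Type*} [MeasurableSpace 𝓧] [DecidableEq 𝓧] {d n : ℕ} (hd : 66 ≤ d)
    (Θ : Set (EuclideanSpace ℝ (Fin d)))
    (p : EuclideanSpace ℝ (Fin d) → Measure 𝓧)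
    (hprob : ∀ θ ∈ Θ, IsProbabilityMeasure (p θ))
    (r₀ : ℝ) (hr₀ : 0 < r₀) (c : EuclideanSpace ℝ (Fin d))
    (hball : Metric.closedBall c r₀ ⊆ Θ)
    (γ : ℝ) (hγ : 0 < γ)
    (hKL : ∀ θ₁ ∈ Θ, ∀ θ₂ ∈ Θ,
      klDiv' (p θ₁) (p θ₂) ≤ ENNReal.ofReal (γ * dist θ₂ θ₁ ^ 2))
    (M : Kernel (Fin n → 𝓧) (EuclideanSpace ℝ (Fin d))) [IsMarkovKernel M]
    (ε : ℝ) (hε : 0 < ε) (hM : IsDP M ε 0)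
    (hxy : 1 / (64 * Real.sqrt (n * γ))
      < Real.sqrt d / (64 ^ 2 * Real.sqrt 2 * n * ε * Real.sqrt γ)) :
    ENNReal.ofReal
        (min (r₀ / Real.sqrt d)
          (Real.sqrt d / (64 ^ 2 * Real.sqrt 2 * n * ε * Real.sqrt γ)) ^ 2
          * d / 32) ≤ wrisk M Θ p := by
  have hdp : 0 < d := by omega
  have hdR : (0 : ℝ) < d := by exact_mod_cast hdp
  set τ := min (r₀ / Real.sqrt d)
    (Real.sqrt d / (64 ^ 2 * Real.sqrt 2 * n * ε * Real.sqrt γ)) with hτ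
  have hτnn : 0 ≤ τ := le_min (by positivity) (by positivity)
  rcases hτnn.eq_or_lt with h0 | h0
  · rw [← h0]; simp
  have hγs : 0 < Real.sqrt γ := Real.sqrt_pos.2 hγ
  have hds : 0 < Real.sqrt d := Real.sqrt_pos.2 hdR
  have hs2 : 1 ≤ Real.sqrt 2 := Real.one_le_sqrt.2 (by norm_num)
  have hs22 : Real.sqrt 2 ^ 2 = 2 := Real.sq_sqrt (by norm_num)
  have hexp : 0 ≤ Real.exp ε - 1 := by
    have := Real.add_one_le_exp ε; linarith
  have hnb : ∀ S, MeasurableSet S → ∀ (x : Fin n → 𝓧) i a,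
      (M (Function.update x i a)).real S ≤ (1 + (Real.exp ε - 1)) * (M x).real S := by
    intro S hS x i a
    have h := hM _ _ (hamming_update x i a) S hS
    rw [← ofReal_measureReal (μ := M (Function.update x i a)) (s := S),
      ← ofReal_measureReal (μ := M x) (s := S), ENNReal.ofReal_zero, add_zero,
      ← ENNReal.ofReal_mul (by positivity), ENNReal.ofReal_le_ofReal_iff (by positivity)] at h
    simpa using h
  rcases le_or_gt ε 1 with hε1 | hε1
  · set t := 2 * (τ * Real.sqrt d * Real.sqrt γ) with ht
    have ht0 : 0 ≤ t := by positivity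
    apply core_packing hdp M Θ p hprob r₀ hr₀ c hball τ h0
      (aux_tau_ball hdp h0 (min_le_left _ _)) ((1 + t * (Real.exp ε - 1)) ^ n)
      (by positivity)
    · have e1 : Real.exp ε - 1 ≤ 2 * ε := by
        have := Real.abs_exp_sub_one_le (x := ε) (by rwa [abs_of_pos hε])
        rw [abs_of_pos hε] at this
        exact (le_abs_self _).trans this
      have e2 : 1 + t * (Real.exp ε - 1) ≤ Real.exp (t * (2 * ε)) := by
        have := Real.add_one_le_exp (t * (2 * ε))
        have := mul_le_mul_of_nonneg_left e1 ht0
        linarith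
      have e3 := pow_le_pow_left₀ (by positivity) e2 n
      rw [← Real.exp_nat_mul] at e3
      refine e3.trans (Real.exp_le_exp.2 ?_)
      have hle : τ ≤ Real.sqrt d / (64 ^ 2 * Real.sqrt 2 * n * ε * Real.sqrt γ) :=
        min_le_right _ _
      have h5 := mul_le_of_le_div₀ (by positivity) (by positivity) hle
      have h6 := mul_le_mul_of_nonneg_right h5 hds.le
      rw [Real.mul_self_sqrt hdR.le] at h6
      set Z := τ * n * ε * Real.sqrt γ * Real.sqrt d with hZ
      have hZ0 : 0 ≤ Z := by positivity
      have h7 : 64 ^ 2 * Real.sqrt 2 * Z ≤ d := by rw [hZ]; linarith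
      have h8 : n * (t * (2 * ε)) = 4 * Z := by rw [hZ, ht]; ring
      rw [h8]
      nlinarith
    · intro θ₁ h1 θ₂ h2 hd12 S hS
      have := hprob _ h1
      have := hprob _ h2
      have hk := KLB_of_klDiv' (p θ₁) (p θ₂) _ (by positivity) (hKL _ h1 _ h2)
      rw [dist_comm, hd12] at hk
      have htv := TVB_of_KLB hk (τ * Real.sqrt d * Real.sqrt γ) (by positivity) (by
        rw [mul_pow, mul_pow, Real.sq_sqrt hγ.le, Real.sq_sqrt hdR.le]; linarith)
      exact hybrid_mul _ _ t _ ht0 hexp htv n _ (test_meas M S hS)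
        (fun x => measureReal_nonneg) (fun x => measureReal_le_one) (hnb S hS)
  · apply core_packing hdp M Θ p hprob r₀ hr₀ c hball τ h0
      (aux_tau_ball hdp h0 (min_le_left _ _)) ((1 + 1 * (Real.exp ε - 1)) ^ n)
      (by positivity)
    · have e : 1 + 1 * (Real.exp ε - 1) = Real.exp ε := by ring
      rw [e, ← Real.exp_nat_mul]
      apply Real.exp_le_exp.2
      rcases Nat.eq_zero_or_pos n with hn | hn
      · subst hn; simp; positivity
      have hnR : (0 : ℝ) < n := by exact_mod_cast hn
      rw [div_lt_div_iff₀ (by positivity) (by positivity), Real.sqrt_mul hnR.le] at hxy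
      have hns : 0 < Real.sqrt n := Real.sqrt_pos.2 hnR
      have hnn : Real.sqrt n ^ 2 = n := Real.sq_sqrt hnR.le
      have hdd : Real.sqrt d ^ 2 = d := Real.sq_sqrt hdR.le
      have h6 : (64 * Real.sqrt 2 * Real.sqrt n * ε) * (64 * Real.sqrt n * Real.sqrt γ)
          < Real.sqrt d * (64 * Real.sqrt n * Real.sqrt γ) := by
        have : (n : ℝ) = Real.sqrt n * Real.sqrt n := by rw [← pow_two, hnn]
        calc _ = 1 * (64 ^ 2 * Real.sqrt 2 * (Real.sqrt n * Real.sqrt n) * ε * Real.sqrt γ) := by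
              ring
          _ = 1 * (64 ^ 2 * Real.sqrt 2 * n * ε * Real.sqrt γ) := by rw [← this]
          _ < _ := hxy
          _ = _ := by ring
      have h7 := lt_of_mul_lt_mul_right h6 (by positivity)
      have h8 := pow_le_pow_left₀ (by positivity) h7.le 2
      rw [mul_pow, mul_pow, mul_pow, hs22, hnn, hdd] at h8
      nlinarith [mul_pos hnR hε]
    · intro θ₁ h1 θ₂ h2 hd12 S hS
      have := hprob _ h1
      have := hprob _ h2
      exact hybrid_mul _ _ 1 _ zero_le_one hexp (TVB_one _ _) n _ (test_meas M S hS)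
        (fun x => measureReal_nonneg) (fun x => measureReal_le_one) (hnb S hS)

end Aux3

/-- **Minimax lower bounds under a quadratic KL control**: let `(p θ)_{θ ∈ Θ}` be a family of
probability distributions, `Θ ⊆ ℝ^d` with `d ≥ 66` containing a Euclidean ball of radius
`r₀ > 0`, and `γ > 0` with `KL(p θ₁ ‖ p θ₂) ≤ γ ‖θ₂ - θ₁‖²` on `Θ`. Then:
(i) the non-private minimax risk is at least `min(r₀/√d, 1/(64√(nγ)))² d / 32`;
(ii) the minimax risk over `ε`-DP mechanisms is at least
`max(min(r₀/√d, 1/(64√(nγ))), min(r₀/√d, √d/(64²√2 n ε √γ)))² d / 32`;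
(iii) for `0 < ρ < 1`, the minimax risk over `ρ`-zCDP mechanisms is at least
`max(min(r₀/√d, 1/(64√(nγ))), min(r₀/√d, 1/(64² 2√2 n √(ργ))))² d / 32`. -/
theorem minimax_lb_of_kl_quadratic {𝓧 : Type*} [MeasurableSpace 𝓧] [DecidableEq 𝓧]
    {d n : ℕ} (hd : 66 ≤ d)
    (Θ : Set (EuclideanSpace ℝ (Fin d)))
    (p : EuclideanSpace ℝ (Fin d) → Measure 𝓧)
    (hprob : ∀ θ ∈ Θ, IsProbabilityMeasure (p θ))
    (r₀ : ℝ) (hr₀ : 0 < r₀) (c : EuclideanSpace ℝ (Fin d))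
    (hball : Metric.closedBall c r₀ ⊆ Θ)
    (γ : ℝ) (hγ : 0 < γ)
    (hKL : ∀ θ₁ ∈ Θ, ∀ θ₂ ∈ Θ,
      klDiv' (p θ₁) (p θ₂) ≤ ENNReal.ofReal (γ * dist θ₂ θ₁ ^ 2)) :
    (ENNReal.ofReal
        (min (r₀ / Real.sqrt d) (1 / (64 * Real.sqrt (n * γ))) ^ 2 * d / 32)
      ≤ minimaxRisk 𝓧 d n Θ p) ∧
    (∀ ε : ℝ, 0 < ε →
      ENNReal.ofReal
          (max (min (r₀ / Real.sqrt d) (1 / (64 * Real.sqrt (n * γ))))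
              (min (r₀ / Real.sqrt d)
                (Real.sqrt d / (64 ^ 2 * Real.sqrt 2 * n * ε * Real.sqrt γ))) ^ 2
            * d / 32)
        ≤ privMinimax 𝓧 d n (fun M => IsDP M ε 0) Θ p) ∧
    (∀ ρ : ℝ, 0 < ρ → ρ < 1 →
      ENNReal.ofReal
          (max (min (r₀ / Real.sqrt d) (1 / (64 * Real.sqrt (n * γ))))
              (min (r₀ / Real.sqrt d)
                (1 / (64 ^ 2 * 2 * Real.sqrt 2 * n * Real.sqrt (ρ * γ)))) ^ 2
            * d / 32)
        ≤ privMinimax 𝓧 d n (fun M => IsZCDP M ρ) Θ p) := by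
  refine ⟨?_, ?_, ?_⟩
  · unfold _root_.minimaxRisk
    refine le_iInf₂ fun f hf => ?_
    have h := risk_nonpriv (n := n) hd Θ p hprob r₀ hr₀ c hball γ hγ hKL
      (Kernel.deterministic f hf.1)
    unfold wrisk at h
    refine h.trans (le_of_eq ?_)
    refine iSup_congr fun θ => iSup_congr fun hθ => ?_
    refine lintegral_congr fun x => ?_
    rw [Kernel.deterministic_apply, lintegral_dirac' _ (by fun_prop)]
  · intro ε hε
    unfold privMinimax
    refine le_iInf₂ fun M hM => ?_
    obtain ⟨hMk, hMC, -⟩ := hM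
    change _ ≤ wrisk M Θ p
    rcases le_or_gt (Real.sqrt d / (64 ^ 2 * Real.sqrt 2 * n * ε * Real.sqrt γ))
      (1 / (64 * Real.sqrt (n * γ))) with h | h
    · rw [max_eq_left (min_le_min le_rfl h)]
      exact risk_nonpriv hd Θ p hprob r₀ hr₀ c hball γ hγ hKL M
    · rw [max_eq_right (min_le_min le_rfl h.le)]
      exact risk_dp hd Θ p hprob r₀ hr₀ c hball γ hγ hKL M ε hε hMC h
  · intro ρ hρ0 hρ1
    unfold privMinimax
    refine le_iInf₂ fun M hM => ?_
    obtain ⟨hMk, hMC, -⟩ := hM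
    change _ ≤ wrisk M Θ p
    rcases max_choice (min (r₀ / Real.sqrt d) (1 / (64 * Real.sqrt (n * γ))))
      (min (r₀ / Real.sqrt d)
        (1 / (64 ^ 2 * 2 * Real.sqrt 2 * n * Real.sqrt (ρ * γ)))) with h | h
    · rw [h]
      exact risk_nonpriv hd Θ p hprob r₀ hr₀ c hball γ hγ hKL M
    · rw [h]
      exact risk_zcdp hd Θ p hprob r₀ hr₀ c hball γ hγ hKL M ρ hρ0 hρ1 hMC
end

section
/- Private minimax lower bounds for the uniform support model: consider the family (U([0,θ])^{⊗n})_{θ∈(0,1]} of n-fold products of uniform distributions on [0,θ], the absolute-value metric and the squared loss. (i) If nε > 1, then the minimax risk over ε-DP mechanisms is at least e^{−1}/(8(nε)²). (ii) If n√ρ > 1, then the minimax risk over ρ-zCDP mechanisms is at least (1 − 1/√2)/(8n²ρ). -/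
open MeasureTheory ProbabilityTheory Real
open scoped ENNReal NNReal

variable {𝓧 𝓨 : Type*} [MeasurableSpace 𝓧] [MeasurableSpace 𝓨]

/-- The uniform distribution on `[0, θ]`, as a measure on `ℝ`. -/
noncomputable def unif (θ : ℝ) : Measure ℝ :=
  ENNReal.ofReal θ⁻¹ • volume.restrict (Set.Icc 0 θ)

/-- The minimax risk over randomized mechanisms `M : [0,1]^n → Θ = (0,1]` satisfying the
privacy condition `C`, for the uniform support model `θ ↦ U([0,θ])^{⊗n}`, the absolute-value
metric and the squared loss. -/
noncomputable def unifPrivMinimax (n : ℕ) (C : Kernel (Fin n → ℝ) ℝ → Prop) : ℝ≥0∞ :=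
  ⨅ M ∈ {M : Kernel (Fin n → ℝ) ℝ | IsMarkovKernel M ∧ C M ∧
      ∀ x, ∀ᵐ t ∂(M x), t ∈ Set.Ioc (0 : ℝ) 1},
    ⨆ θ ∈ Set.Ioc (0 : ℝ) 1,
      ∫⁻ x, ∫⁻ t, ENNReal.ofReal (|t - θ| ^ 2) ∂(M x)
        ∂(Measure.pi fun _ : Fin n => unif θ)

lemma binary_aux (p p' q q' A A' ρ b : ℝ) (hp : 0 < p) (hp' : 0 ≤ p') (hq : 0 < q) (hq' : 0 < q')
    (h1 : p + p' = 1) (hb : 0 < b)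
    (hA : p ^ (1 + b) ≤ A * q ^ b) (hA' : p' ^ (1 + b) ≤ A' * q' ^ b)
    (hAA : A + A' ≤ Real.exp (ρ * (1 + b) * b))
    (hH : ∀ t : ℝ, q * Real.exp t + q' ≤ Real.exp (t * q + t ^ 2 / 8)) :
    2 * (p - q) ^ 2 ≤ ρ * (1 + b) := by
  set t := 4 * (p - q) with ht
  have e1 : p * (p / q) ^ b ≤ A := by
    rw [Real.div_rpow hp.le hq.le, ← mul_div_assoc, div_le_iff₀ (Real.rpow_pos_of_pos hq _)]
    rwa [Real.rpow_add hp, Real.rpow_one] at hA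
  have e2 : p' * (p' / q') ^ b ≤ A' := by
    rw [Real.div_rpow hp' hq'.le, ← mul_div_assoc, div_le_iff₀ (Real.rpow_pos_of_pos hq' _)]
    rcases hp'.eq_or_lt with h | h
    · rw [← h] at hA' ⊢
      rw [Real.zero_rpow (by linarith)] at hA'
      simpa using hA'
    · rwa [Real.rpow_add h, Real.rpow_one] at hA'
  have am1 := Real.geom_mean_le_arith_mean2_weighted hp.le hp'
    (Real.rpow_nonneg (div_nonneg hp.le hq.le) b) (Real.rpow_nonneg (div_nonneg hp' hq'.le) b) h1
  have am2 := Real.geom_mean_le_arith_mean2_weighted (p₁ := q * Real.exp t / p) (p₂ := q' / p')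
    hp.le hp' (by positivity) (by positivity) h1
  have e3 : p * (q * Real.exp t / p) + p' * (q' / p') ≤ q * Real.exp t + q' := by
    have : p * (q * Real.exp t / p) = q * Real.exp t := by field_simp
    rw [this]
    rcases hp'.eq_or_lt with h | h
    · rw [← h]; simp [hq'.le]
    · have : p' * (q' / p') = q' := by field_simp
      rw [this]
  set K := (p / q) ^ p * (p' / q') ^ p' with hK
  have hK0 : 0 < K := by
    apply mul_pos (by positivity)
    rcases hp'.eq_or_lt with h | h
    · rw [← h]; simp
    · positivity
  have e4 : K ^ b ≤ Real.exp (ρ * (1 + b) * b) := by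
    calc K ^ b = ((p / q) ^ b) ^ p * ((p' / q') ^ b) ^ p' := by
          rw [hK, Real.mul_rpow (by positivity) (by positivity), ← Real.rpow_mul (by positivity),
            ← Real.rpow_mul (by positivity), ← Real.rpow_mul (by positivity),
            ← Real.rpow_mul (by positivity), mul_comm b p, mul_comm b p']
      _ ≤ _ := by linarith
  have e5 : K ≤ Real.exp (ρ * (1 + b)) := by
    rw [Real.exp_mul] at e4
    exact (Real.rpow_le_rpow_iff hK0.le (Real.exp_pos _).le hb).1 e4
  have e6 : K * ((q * Real.exp t / p) ^ p * (q' / p') ^ p') = Real.exp (t * p) := by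
    have a1 : (p / q) ^ p * (q * Real.exp t / p) ^ p = Real.exp (t * p) := by
      rw [← Real.mul_rpow (by positivity) (by positivity), Real.exp_mul t p]
      have : p / q * (q * Real.exp t / p) = Real.exp t := by
        generalize Real.exp t = E
        field_simp
      rw [this]
    have a2 : (p' / q') ^ p' * (q' / p') ^ p' = 1 := by
      rcases hp'.eq_or_lt with h | h
      · rw [← h]; simp
      · rw [← Real.mul_rpow (by positivity) (by positivity)]
        have : p' / q' * (q' / p') = 1 := by field_simp
        rw [this, Real.one_rpow]
    rw [hK, mul_mul_mul_comm, a1, a2, mul_one]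
  have e7 : Real.exp (t * p) ≤ Real.exp (ρ * (1 + b)) * Real.exp (t * q + t ^ 2 / 8) := by
    rw [← e6]
    apply mul_le_mul e5 _ (by positivity) (Real.exp_pos _).le
    linarith [hH t]
  rw [← Real.exp_add, Real.exp_le_exp] at e7
  rw [ht] at e7
  nlinarith

lemma hoeff_aux {α : Type*} [MeasurableSpace α] (Q : Measure α) [IsProbabilityMeasure Q]
    (S : Set α) (hS : MeasurableSet S) (t : ℝ) :
    Q.real S * Real.exp t + Q.real Sᶜ ≤ Real.exp (t * Q.real S + t ^ 2 / 8) := by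
  have hX : AEMeasurable (S.indicator (fun _ => (1 : ℝ))) Q :=
    (measurable_const.indicator hS).aemeasurable
  have h := hasSubgaussianMGF_of_mem_Icc (μ := Q) (a := 0) (b := 1) hX
    (Filter.Eventually.of_forall fun ω => by
      by_cases hω : ω ∈ S <;> simp [hω])
  have hint : ∫ ω, S.indicator (fun _ => (1 : ℝ)) ω ∂Q = Q.real S := by
    rw [integral_indicator hS]; simp
  have h2 := h.mgf_le t
  rw [hint] at h2
  have h3 : mgf (fun ω => S.indicator (fun _ => (1 : ℝ)) ω - Q.real S) Q t
      = Real.exp (- (t * Q.real S)) * (Q.real S * Real.exp t + Q.real Sᶜ) := by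
    unfold mgf
    have : (fun ω => Real.exp (t * (S.indicator (fun _ => (1 : ℝ)) ω - Q.real S)))
        = fun ω => Real.exp (- (t * Q.real S)) * (S.indicator (fun _ => Real.exp t) ω
            + Sᶜ.indicator (fun _ => (1 : ℝ)) ω) := by
      funext ω
      by_cases hω : ω ∈ S
      · simp [hω, ← Real.exp_add]; ring
      · simp [hω]
    rw [this, integral_const_mul, integral_add, integral_indicator hS,
      integral_indicator hS.compl]
    · simp
    · exact (integrable_const _).indicator hS
    · exact (integrable_const _).indicator hS.compl
  rw [h3, Real.exp_neg, inv_mul_le_iff₀ (Real.exp_pos _), ← Real.exp_add] at h2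
  refine h2.trans (le_of_eq ?_)
  congr 1
  norm_num
  ring

lemma holder_aux {α : Type*} [MeasurableSpace α] (P Q : Measure α) [IsProbabilityMeasure P]
    [IsProbabilityMeasure Q] (hac : P ≪ Q) (b : ℝ) (hb : 0 < b)
    (hfin : ∫⁻ x, (P.rnDeriv Q x) ^ (1 + b) ∂Q ≠ ⊤) (S : Set α) :
    (P.real S) ^ (1 + b) ≤ (∫⁻ x in S, (P.rnDeriv Q x) ^ (1 + b) ∂Q).toReal * (Q.real S) ^ b := by
  have hfinS : ∫⁻ x in S, (P.rnDeriv Q x) ^ (1 + b) ∂Q ≠ ⊤ :=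
    ((setLIntegral_le_lintegral _ _).trans_lt hfin.lt_top).ne
  have hc : (1 + b).HolderConjugate (1 + b⁻¹) := by
    rw [Real.holderConjugate_iff]
    constructor
    · linarith
    · field_simp
      try ring
  have h := ENNReal.lintegral_mul_le_Lp_mul_Lq (Q.restrict S) hc
    (f := P.rnDeriv Q) (g := fun _ => 1) (Measure.measurable_rnDeriv _ _).aemeasurable
    aemeasurable_const
  simp only [Pi.mul_apply, mul_one, ENNReal.one_rpow, lintegral_const, Measure.restrict_apply_univ,
    one_mul, Measure.setLIntegral_rnDeriv hac] at h
  have h2 := ENNReal.rpow_le_rpow h (by linarith : 0 ≤ 1 + b)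
  rw [ENNReal.mul_rpow_of_nonneg _ _ (by linarith), ← ENNReal.rpow_mul, ← ENNReal.rpow_mul] at h2
  have i1 : 1 / (1 + b) * (1 + b) = 1 := by field_simp
  have i2 : 1 / (1 + b⁻¹) * (1 + b) = b := by field_simp; try ring
  rw [i1, i2, ENNReal.rpow_one] at h2
  have h3 := ENNReal.toReal_mono (by
    apply ENNReal.mul_ne_top hfinS
    exact ENNReal.rpow_ne_top_of_nonneg hb.le (measure_ne_top _ _)) h2
  rw [ENNReal.toReal_mul, ← ENNReal.toReal_rpow, ← ENNReal.toReal_rpow] at h3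
  exact h3

lemma renyi_tv {α : Type*} [MeasurableSpace α] (P Q : Measure α) [IsProbabilityMeasure P]
    [IsProbabilityMeasure Q] (ρ : ℝ) (hρ : 0 < ρ)
    (h : ∀ a : ℝ, 1 < a → renyiDiv a P Q ≤ ENNReal.ofReal (ρ * a))
    (S : Set α) (hS : MeasurableSet S) : P.real S - Q.real S ≤ Real.sqrt (ρ / 2) := by
  rcases le_or_gt (P.real S) (Q.real S) with hle | hlt
  · have := Real.sqrt_nonneg (ρ / 2)
    linarith
  have key : ∀ b : ℝ, 0 < b → 2 * (P.real S - Q.real S) ^ 2 ≤ ρ * (1 + b) := by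
    intro b hb
    have hr := h (1 + b) (by linarith)
    unfold renyiDiv at hr
    split_ifs at hr with hcond
    swap
    · simp at hr
    obtain ⟨hac, hfin⟩ := hcond
    have hP1 : P.real S + P.real Sᶜ = 1 := probReal_add_probReal_compl hS
    have hQ1 : Q.real S + Q.real Sᶜ = 1 := probReal_add_probReal_compl hS
    have hPc : 0 ≤ P.real Sᶜ := measureReal_nonneg
    have hQn : 0 ≤ Q.real S := measureReal_nonneg
    have hq : 0 < Q.real S := by
      rcases hQn.eq_or_lt with h0 | h0
      · exfalso
        have : Q S = 0 := by
          rwa [eq_comm, measureReal_eq_zero_iff] at h0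
        have := hac this
        rw [measureReal_def, measureReal_def, this] at hlt
        simp at hlt
        exact absurd hlt (not_lt.2 ENNReal.toReal_nonneg)
      · exact h0
    refine binary_aux (P.real S) (P.real Sᶜ) (Q.real S) (Q.real Sᶜ) _ _ ρ b (by linarith) hPc hq
      (by linarith) hP1 hb (holder_aux P Q hac b hb hfin S) (holder_aux P Q hac b hb hfin Sᶜ) ?_
      (hoeff_aux Q S hS)
    have hs : ∀ S : Set α, ∫⁻ x in S, (P.rnDeriv Q x) ^ (1 + b) ∂Q ≠ ⊤ := fun S =>
      ((setLIntegral_le_lintegral _ _).trans_lt hfin.lt_top).ne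
    rw [← ENNReal.toReal_add (hs _) (hs _), lintegral_add_compl _ hS]
    rw [ENNReal.ofReal_le_ofReal_iff (by positivity), add_sub_cancel_left,
      inv_mul_le_iff₀ hb] at hr
    rcases (ENNReal.toReal_nonneg (a := ∫⁻ x, (P.rnDeriv Q x) ^ (1 + b) ∂Q)).eq_or_lt with h0 | h0
    · rw [← h0]; positivity
    · rw [← Real.log_le_iff_le_exp h0]
      linarith
  apply Real.le_sqrt_of_sq_le
  have : 2 * (P.real S - Q.real S) ^ 2 ≤ ρ := by
    apply le_of_forall_pos_le_add
    intro e he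
    have := key (e / ρ) (by positivity)
    have h2 : ρ * (1 + e / ρ) = ρ + e := by field_simp
    linarith
  linarith

lemma hamming_step {n : ℕ} (x y : Fin n → ℝ) (k : ℕ) (h : hammingDist x y = k + 1) :
    ∃ z : Fin n → ℝ, hammingDist x z ≤ 1 ∧ hammingDist z y = k := by
  have hne : x ≠ y := by
    rintro rfl
    simp at h
  obtain ⟨i, hi⟩ := Function.ne_iff.1 hne
  refine ⟨Function.update x i (y i), ?_, ?_⟩
  · unfold hammingDist
    refine (Finset.card_le_card (t := {i}) ?_).trans (by simp)
    intro j hj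
    simp only [Finset.mem_filter, Finset.mem_univ, true_and] at hj
    by_contra hji
    simp at hji
    simp [hji] at hj
  · unfold hammingDist at h ⊢
    have : (Finset.univ.filter fun j => Function.update x i (y i) j ≠ y j)
        = (Finset.univ.filter fun j => x j ≠ y j).erase i := by
      ext j
      by_cases hj : j = i
      · subst hj; simp
      · simp [hj]
    rw [this, Finset.card_erase_of_mem (by simpa using hi), h]
    simp

lemma dp_group {n : ℕ} (M : Kernel (Fin n → ℝ) ℝ) (ε : ℝ) (h : IsDP M ε 0)
    (S : Set ℝ) (hS : MeasurableSet S) (k : ℕ) : ∀ x y : Fin n → ℝ, hammingDist x y = k →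
      M x S ≤ ENNReal.ofReal (Real.exp (k * ε)) * M y S := by
  induction k with
  | zero => intro x y hxy; rw [hammingDist_eq_zero] at hxy; simp [hxy]
  | succ k ih =>
    intro x y hxy
    obtain ⟨z, hz1, hz2⟩ := hamming_step x y k hxy
    have h1 := h x z hz1 S hS
    rw [ENNReal.ofReal_zero, add_zero] at h1
    refine h1.trans ?_
    refine (mul_le_mul_right (ih z y hz2) _).trans (le_of_eq ?_)
    rw [← mul_assoc, ← ENNReal.ofReal_mul (Real.exp_pos _).le, ← Real.exp_add]
    push_cast
    ring_nf

lemma zcdp_group {n : ℕ} (M : Kernel (Fin n → ℝ) ℝ) [IsMarkovKernel M] (ρ : ℝ) (hρ : 0 < ρ)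
    (h : IsZCDP M ρ)
    (S : Set ℝ) (hS : MeasurableSet S) (k : ℕ) : ∀ x y : Fin n → ℝ, hammingDist x y = k →
      (M x).real S - (M y).real S ≤ k * Real.sqrt (ρ / 2) := by
  induction k with
  | zero => intro x y hxy; rw [hammingDist_eq_zero] at hxy; simp [hxy]
  | succ k ih =>
    intro x y hxy
    obtain ⟨z, hz1, hz2⟩ := hamming_step x y k hxy
    have h1 := renyi_tv (M x) (M z) ρ hρ (h x z hz1) S hS
    have h2 := ih z y hz2
    push_cast
    linarith

/-- transport map -/
noncomputable def Tmap (θ u : ℝ) : ℝ := if u ≤ θ then u else θ / (1 - θ) * (u - θ)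

lemma measurable_Tmap (θ : ℝ) : Measurable (Tmap θ) := by
  unfold Tmap
  exact Measurable.ite measurableSet_Iic measurable_id (by fun_prop)

lemma map_Tmap (θ : ℝ) (h0 : 0 < θ) (h1 : θ < 1) : (unif 1).map (Tmap θ) = unif θ := by
  ext A hA
  have h1' : 0 < 1 - θ := by linarith
  have hc : 0 < θ / (1 - θ) := by positivity
  rw [Measure.map_apply (measurable_Tmap θ) hA]
  unfold unif
  simp only [Measure.smul_apply, smul_eq_mul, inv_one, ENNReal.ofReal_one, one_mul]
  rw [Measure.restrict_apply (measurable_Tmap θ hA), Measure.restrict_apply hA]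
  have split : Tmap θ ⁻¹' A ∩ Set.Icc 0 1 = (A ∩ Set.Icc 0 θ) ∪
      ((fun u => u + (-θ)) ⁻¹' ((fun u => θ / (1 - θ) * u) ⁻¹' (A ∩ Set.Ioc 0 θ))) := by
    ext u
    simp only [Set.mem_inter_iff, Set.mem_preimage, Set.mem_Icc, Set.mem_union, Set.mem_Ioc, Tmap]
    have key1 : 0 < θ / (1 - θ) * (u + -θ) ↔ θ < u := by
      rw [mul_pos_iff_of_pos_left hc]; constructor <;> intro <;> linarith
    have key2 : θ / (1 - θ) * (u + -θ) ≤ θ ↔ u ≤ 1 := by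
      rw [div_mul_eq_mul_div, div_le_iff₀ h1', mul_le_mul_iff_right₀ h0]
      constructor <;> intro <;> linarith
    rw [key1, key2, ← sub_eq_add_neg]
    by_cases hu : u ≤ θ
    · simp only [hu, if_true]
      constructor
      · rintro ⟨a, b, c⟩; exact Or.inl ⟨a, b, trivial⟩
      · rintro (⟨a, b, c⟩ | ⟨a, b, c⟩)
        · exact ⟨a, b, by linarith⟩
        · linarith
    · simp only [hu, if_false]
      push Not at hu
      constructor
      · rintro ⟨a, b, c⟩; exact Or.inr ⟨a, hu, c⟩
      · rintro (⟨a, b, c⟩ | ⟨a, b, c⟩)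
        · exact c.elim
        · exact ⟨a, by linarith, c⟩
  have hB : MeasurableSet (A ∩ Set.Ioc 0 θ) := hA.inter measurableSet_Ioc
  rw [split, measure_union]
  · rw [measure_preimage_add_right, Real.volume_preimage_mul_left hc.ne']
    have : volume (A ∩ Set.Ioc 0 θ) = volume (A ∩ Set.Icc 0 θ) := by
      apply measure_congr
      exact (Filter.EventuallyEq.refl _ _).inter Ioc_ae_eq_Icc
    rw [this, abs_of_pos (by positivity)]
    nth_rw 1 [← one_mul (volume (A ∩ Set.Icc 0 θ))]
    rw [← add_mul, ← ENNReal.ofReal_one, ← ENNReal.ofReal_add zero_le_one (by positivity)]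
    congr 2
    field_simp
    ring
  · rw [Set.disjoint_left]
    rintro u ⟨_, _, hu⟩ ⟨_, hu2, _⟩
    have : 0 < θ / (1 - θ) * (u + -θ) := hu2
    rw [mul_pos_iff_of_pos_left hc] at this
    linarith
  · exact (measurable_add_const (-θ)) (measurable_const_mul (θ / (1 - θ)) hB)

lemma unif_prob (θ : ℝ) (h0 : 0 < θ) : IsProbabilityMeasure (unif θ) := by
  constructor
  unfold unif
  simp only [Measure.smul_apply, smul_eq_mul, Measure.restrict_apply_univ, Real.volume_Icc, sub_zero]
  rw [← ENNReal.ofReal_mul (by positivity), inv_mul_cancel₀ h0.ne', ENNReal.ofReal_one]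

lemma pi_map_Tmap (n : ℕ) (θ : ℝ) (h0 : 0 < θ) (h1 : θ < 1) :
    (Measure.pi fun _ : Fin n => unif 1).map (fun x i => Tmap θ (x i))
      = Measure.pi fun _ : Fin n => unif θ := by
  have := unif_prob θ h0
  have := unif_prob 1 one_pos
  have : IsProbabilityMeasure ((unif 1).map (Tmap θ)) := by rw [map_Tmap θ h0 h1]; infer_instance
  rw [Measure.pi_map_pi (fun i => (measurable_Tmap θ).aemeasurable)]
  simp_rw [map_Tmap θ h0 h1]

lemma hamming_int (n : ℕ) (θ : ℝ) (h0 : 0 < θ) (h1 : θ < 1) :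
    ∫⁻ x, (hammingDist x (fun i => Tmap θ (x i)) : ℝ≥0∞) ∂(Measure.pi fun _ : Fin n => unif 1)
      ≤ ENNReal.ofReal (n * (1 - θ)) := by
  have := unif_prob 1 one_pos
  have hle : ∀ x : Fin n → ℝ, (hammingDist x (fun i => Tmap θ (x i)) : ℝ≥0∞) ≤
      ∑ i : Fin n, (Set.Ioi θ).indicator (fun _ => (1 : ℝ≥0∞)) (x i) := by
    intro x
    unfold hammingDist
    rw [Finset.card_filter, Nat.cast_sum]
    apply Finset.sum_le_sum
    intro i _
    by_cases hi : x i ≤ θ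
    · simp [Tmap, hi]
    · have : x i ∈ Set.Ioi θ := not_le.1 hi
      rw [Set.indicator_of_mem this]
      split_ifs <;> simp
  refine (lintegral_mono hle).trans ?_
  have hm : Measurable ((Set.Ioi θ).indicator (fun _ : ℝ => (1 : ℝ≥0∞))) :=
    measurable_const.indicator measurableSet_Ioi
  have hm' : ∀ i : Fin n, Measurable fun x : Fin n → ℝ =>
      (Set.Ioi θ).indicator (fun _ : ℝ => (1 : ℝ≥0∞)) (x i) :=
    fun i => hm.comp (measurable_pi_apply i)
  rw [lintegral_finsetSum _ (fun i _ => hm' i)]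
  have : ∀ i : Fin n, ∫⁻ x, (Set.Ioi θ).indicator (fun _ => (1 : ℝ≥0∞)) (x i)
      ∂(Measure.pi fun _ : Fin n => unif 1) = ENNReal.ofReal (1 - θ) := by
    intro i
    rw [(measurePreserving_eval (fun _ : Fin n => unif 1) i).lintegral_comp hm,
      lintegral_indicator measurableSet_Ioi]
    simp only [lintegral_const, Measure.restrict_apply_univ, one_mul]
    unfold unif
    simp only [Measure.smul_apply, smul_eq_mul, inv_one, ENNReal.ofReal_one, one_mul]
    rw [Measure.restrict_apply measurableSet_Ioi]
    have : Set.Ioi θ ∩ Set.Icc 0 1 = Set.Ioc θ 1 := by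
      ext u
      simp only [Set.mem_inter_iff, Set.mem_Ioi, Set.mem_Icc, Set.mem_Ioc]
      constructor
      · rintro ⟨a, b, c⟩; exact ⟨a, c⟩
      · rintro ⟨a, b⟩; exact ⟨a, by linarith, b⟩
    rw [this, Real.volume_Ioc]
  simp only [this, Finset.sum_const, Finset.card_univ, Fintype.card_fin, nsmul_eq_mul]
  rw [ENNReal.ofReal_mul (by positivity), ENNReal.ofReal_natCast]

lemma sq_lower (ν : Measure ℝ) (S : Set ℝ) (hS : MeasurableSet S) (θ d : ℝ)
    (h : ∀ t ∈ S, d ≤ |t - θ| ^ 2) :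
    ENNReal.ofReal d * ν S ≤ ∫⁻ t, ENNReal.ofReal (|t - θ| ^ 2) ∂ν := by
  rw [← setLIntegral_const]
  refine (setLIntegral_mono' hS ?_).trans (setLIntegral_le_lintegral S _)
  intro t ht
  exact ENNReal.ofReal_le_ofReal (h t ht)

lemma le_cam (n : ℕ) (M : Kernel (Fin n → ℝ) ℝ) [IsMarkovKernel M] (Δ A B c : ℝ)
    (h0 : 0 < Δ) (h1 : Δ < 1) (hB : 0 ≤ B) (hc : 0 ≤ c) (hAB : A = c + B * (n * Δ))
    (h : ∀ S : Set ℝ, MeasurableSet S → ∀ x y : Fin n → ℝ,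
      ENNReal.ofReal A ≤ M x S + M y Sᶜ + ENNReal.ofReal B * (hammingDist x y : ℝ≥0∞)) :
    ENNReal.ofReal (c * Δ ^ 2 / 8) ≤ ⨆ θ ∈ Set.Ioc (0 : ℝ) 1,
      ∫⁻ x, ∫⁻ t, ENNReal.ofReal (|t - θ| ^ 2) ∂(M x)
        ∂(Measure.pi fun _ : Fin n => unif θ) := by
  set R : ℝ → ℝ≥0∞ := fun θ => ∫⁻ x, ∫⁻ t, ENNReal.ofReal (|t - θ| ^ 2) ∂(M x)
        ∂(Measure.pi fun _ : Fin n => unif θ) with hR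
  set θ := 1 - Δ with hθ
  have := unif_prob 1 one_pos
  set μ := Measure.pi fun _ : Fin n => unif 1 with hμ
  set T : (Fin n → ℝ) → (Fin n → ℝ) := fun x i => Tmap θ (x i) with hT
  have hTm : Measurable T := measurable_pi_lambda _ fun i =>
    (measurable_Tmap θ).comp (measurable_pi_apply i)
  set S : Set ℝ := Set.Iic (1 - Δ / 2) with hSdef
  have hS : MeasurableSet S := measurableSet_Iic
  have mS : ∀ U : Set ℝ, MeasurableSet U → Measurable fun x => M x U :=
    fun U hU => M.measurable_coe hU
  have r1 : ENNReal.ofReal (Δ ^ 2 / 4) * ∫⁻ x, M x S ∂μ ≤ R 1 := by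
    rw [← lintegral_const_mul _ (mS S hS)]
    refine lintegral_mono fun x => sq_lower _ _ hS _ _ ?_
    intro t ht
    have : t ≤ 1 - Δ / 2 := ht
    rw [sq_abs]
    nlinarith
  have r2 : ENNReal.ofReal (Δ ^ 2 / 4) * ∫⁻ x, M (T x) Sᶜ ∂μ ≤ R θ := by
    have : R θ = ∫⁻ x, ∫⁻ t, ENNReal.ofReal (|t - θ| ^ 2) ∂(M (T x)) ∂μ := by
      simp only [hR]
      rw [← pi_map_Tmap n θ (by linarith) (by linarith), lintegral_map _ hTm]
      exact Measurable.lintegral_kernel (by fun_prop)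
    have mT : Measurable fun x => M (T x) Sᶜ := (mS _ hS.compl).comp hTm
    rw [this, ← lintegral_const_mul _ mT]
    refine lintegral_mono fun x => sq_lower _ _ hS.compl _ _ ?_
    intro t ht
    have : 1 - Δ / 2 < t := not_le.1 ht
    rw [sq_abs]
    nlinarith
  have r3 : ENNReal.ofReal c ≤ ∫⁻ x, M x S ∂μ + ∫⁻ x, M (T x) Sᶜ ∂μ := by
    have i1 : ENNReal.ofReal A ≤ ∫⁻ x, M x S ∂μ + ∫⁻ x, M (T x) Sᶜ ∂μ +
        ENNReal.ofReal (B * (n * Δ)) := by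
      calc ENNReal.ofReal A = ∫⁻ x, ENNReal.ofReal A ∂μ := by simp
        _ ≤ ∫⁻ x, (M x S + M (T x) Sᶜ + ENNReal.ofReal B * (hammingDist x (T x) : ℝ≥0∞)) ∂μ :=
            lintegral_mono fun x => h S hS x (T x)
        _ = ∫⁻ x, M x S ∂μ + ∫⁻ x, M (T x) Sᶜ ∂μ +
            ENNReal.ofReal B * ∫⁻ x, (hammingDist x (T x) : ℝ≥0∞) ∂μ := by
          rw [lintegral_add_left, lintegral_add_left (mS S hS),
            lintegral_const_mul' _ _ ENNReal.ofReal_ne_top]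
          exact (mS S hS).add ((mS _ hS.compl).comp hTm)
        _ ≤ _ := by
          rw [ENNReal.ofReal_mul hB]
          gcongr
          have := hamming_int n θ (by linarith) (by linarith)
          rwa [hθ, sub_sub_cancel] at this
    rw [hAB, ENNReal.ofReal_add hc (by positivity)] at i1
    exact (ENNReal.add_le_add_iff_right ENNReal.ofReal_ne_top).1 i1
  have s1 : R 1 ≤ ⨆ θ ∈ Set.Ioc (0 : ℝ) 1, R θ :=
    le_iSup₂_of_le (f := fun θ (_ : θ ∈ Set.Ioc (0 : ℝ) 1) => R θ) 1 (by simp) le_rfl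
  have s2 : R θ ≤ ⨆ θ ∈ Set.Ioc (0 : ℝ) 1, R θ :=
    le_iSup₂_of_le (f := fun θ (_ : θ ∈ Set.Ioc (0 : ℝ) 1) => R θ) θ
      ⟨by linarith, by linarith⟩ le_rfl
  set W := ⨆ θ ∈ Set.Ioc (0 : ℝ) 1, R θ with hW
  have fin : ENNReal.ofReal (Δ ^ 2 / 4) * ENNReal.ofReal c ≤ 2 * W := by
    calc _ ≤ ENNReal.ofReal (Δ ^ 2 / 4) * (∫⁻ x, M x S ∂μ + ∫⁻ x, M (T x) Sᶜ ∂μ) := by gcongr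
      _ ≤ W + W := by rw [mul_add]; exact add_le_add (r1.trans s1) (r2.trans s2)
      _ = _ := (two_mul W).symm
  have e : ENNReal.ofReal (Δ ^ 2 / 4) * ENNReal.ofReal c = 2 * ENNReal.ofReal (c * Δ ^ 2 / 8) := by
    rw [← ENNReal.ofReal_mul (by positivity), ← ENNReal.ofReal_ofNat 2,
      ← ENNReal.ofReal_mul (by positivity)]
    congr 1
    ring
  rw [e] at fin
  exact (ENNReal.mul_le_mul_iff_right (by simp) (by simp)).1 fin

/-- **Private minimax lower bounds for the uniform support model**:
(i) if `n ε > 1` then the minimax risk over `ε`-DP mechanisms is at least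
`e^{-1} / (8 (nε)²)`;
(ii) if `n √ρ > 1` then the minimax risk over `ρ`-zCDP mechanisms is at least
`(1 - 1/√2) / (8 n² ρ)`. -/
theorem uniform_private_minimax_lb (n : ℕ) :
    (∀ ε : ℝ, 0 < ε → 1 < n * ε →
      ENNReal.ofReal (Real.exp (-1) / (8 * (n * ε) ^ 2))
        ≤ unifPrivMinimax n (fun M => IsDP M ε 0)) ∧
    (∀ ρ : ℝ, 0 < ρ → 1 < n * Real.sqrt ρ →
      ENNReal.ofReal ((1 - 1 / Real.sqrt 2) / (8 * (n : ℝ) ^ 2 * ρ))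
        ≤ unifPrivMinimax n (fun M => IsZCDP M ρ)) := by
  constructor
  · intro ε hε hn
    unfold unifPrivMinimax
    refine le_iInf₂ fun M hM => ?_
    obtain ⟨hMk, hDP, -⟩ := hM
    have hpos : 0 < n * ε := by linarith
    have hn0 : (n : ℝ) ≠ 0 := by rintro h; simp [h] at hpos
    have := le_cam n M (1 / (n * ε)) (2 * Real.exp (-1)) (Real.exp (-1) * ε) (Real.exp (-1))
      (by positivity) (by rwa [div_lt_one hpos]) (by positivity) (by positivity)
      (by field_simp; ring) ?_
    · refine le_trans (le_of_eq ?_) this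
      congr 1
      field_simp
    · intro S hS x y
      set k := hammingDist x y with hk
      have hg := dp_group M ε hDP S hS k y x (by rw [hammingDist_comm])
      have hyS : M y S + M y Sᶜ = 1 := by rw [measure_add_measure_compl hS, measure_univ]
      have f1 : M y S ≠ ⊤ := measure_ne_top _ _
      have f2 : M y Sᶜ ≠ ⊤ := measure_ne_top _ _
      have f3 : M x S ≠ ⊤ := measure_ne_top _ _
      have hg' : (M y).real S ≤ Real.exp (k * ε) * (M x).real S := by
        have := ENNReal.toReal_mono (ENNReal.mul_ne_top ENNReal.ofReal_ne_top f3) hg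
        rwa [ENNReal.toReal_mul, ENNReal.toReal_ofReal (Real.exp_pos _).le] at this
      have hyS' : (M y).real S + (M y).real Sᶜ = 1 := probReal_add_probReal_compl hS
      rw [← ofReal_measureReal f3, ← ofReal_measureReal f2, ← ENNReal.ofReal_natCast k,
        ← ENNReal.ofReal_mul (by positivity), ← ENNReal.ofReal_add (by positivity) (by positivity),
        ← ENNReal.ofReal_add (by positivity) (by positivity)]
      apply ENNReal.ofReal_le_ofReal
      have hE : Real.exp (-(k * ε)) ≤ 1 := by
        rw [Real.exp_le_one_iff]; have : 0 ≤ k * ε := by positivity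
        linarith
      have hx : Real.exp (-(k * ε)) * (M y).real S ≤ (M x).real S := by
        rw [Real.exp_neg, inv_mul_le_iff₀ (Real.exp_pos _)]
        exact hg'
      have htan : Real.exp (-1) * (2 - k * ε) ≤ Real.exp (-(k * ε)) := by
        have h1 := Real.add_one_le_exp (1 - k * ε)
        have h2 : Real.exp (-(k * ε)) = Real.exp (-1) * Real.exp (1 - k * ε) := by
          rw [← Real.exp_add]; ring_nf
        rw [h2]
        apply mul_le_mul_of_nonneg_left _ (Real.exp_pos _).le
        linarith
      have hc : 0 ≤ (M y).real Sᶜ := measureReal_nonneg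
      nlinarith
  · intro ρ hρ hn
    unfold unifPrivMinimax
    refine le_iInf₂ fun M hM => ?_
    obtain ⟨hMk, hZ, -⟩ := hM
    have hpos : 0 < n * Real.sqrt ρ := by linarith
    have hn0 : (n : ℝ) ≠ 0 := by rintro h; simp [h] at hpos
    have hs : 0 < Real.sqrt ρ := Real.sqrt_pos.2 hρ
    have hsq : Real.sqrt ρ ^ 2 = ρ := Real.sq_sqrt hρ.le
    have h2 : 1 ≤ Real.sqrt 2 := by rw [Real.one_le_sqrt]; norm_num
    have := le_cam n M (1 / (n * Real.sqrt ρ)) 1 (Real.sqrt (ρ / 2)) (1 - 1 / Real.sqrt 2)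
      (by positivity) (by rwa [div_lt_one hpos]) (by positivity)
      (by rw [sub_nonneg, div_le_one (by positivity)]; exact h2)
      (by rw [Real.sqrt_div hρ.le]; field_simp; ring) ?_
    · refine le_trans (le_of_eq ?_) this
      congr 1
      rw [div_pow, mul_pow, hsq]
      field_simp
    · intro S hS x y
      set k := hammingDist x y with hk
      have hg := zcdp_group M ρ hρ hZ S hS k y x (by rw [hammingDist_comm])
      have hyS' : (M y).real S + (M y).real Sᶜ = 1 := probReal_add_probReal_compl hS
      have f2 : M y Sᶜ ≠ ⊤ := measure_ne_top _ _
      have f3 : M x S ≠ ⊤ := measure_ne_top _ _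
      rw [← ofReal_measureReal f3, ← ofReal_measureReal f2, ← ENNReal.ofReal_natCast k,
        ← ENNReal.ofReal_mul (by positivity), ← ENNReal.ofReal_add (by positivity) (by positivity),
        ← ENNReal.ofReal_add (by positivity) (by positivity)]
      apply ENNReal.ofReal_le_ofReal
      linarith
end
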